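/- arXiv:1805.08965 — 5 statements merged into one kernel-verified Lean document; each statement's English description precedes it below -/
import Mathlib

section
/- Let G be a group, A a subgroup of G, and N a finite normal subgroup of G contained in A. If A is an RS-subgroup of G, then the image A/N of A in the quotient group G/N is an RS-subgroup of G/N. -/
/-- A torsion element `x` of a group `G` is an *RS-element* of `G` if for every positive
integer `j` coprime to the order of `x`, `x ^ j` is conjugate in `G` to `x` or to `x⁻¹`. -/
def IsRSElement {G : Type*} [Group G] (x : G) : Prop :=
  ∀ j : ℕ, 0 < j → Nat.Coprime j (orderOf x) → (IsConj (x ^ j) x ∨ IsConj (x ^ j) x⁻¹)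

/-- A subgroup `A` of `G` is an *RS-subgroup* of `G` if every torsion element of `A`
is an RS-element of `G`. -/
def IsRSSubgroup {G : Type*} [Group G] (A : Subgroup G) : Prop :=
  ∀ a ∈ A, IsOfFinOrder a → IsRSElement a

/-- If `A` is an RS-subgroup of `G` and `N` is a finite normal subgroup of `G` contained
in `A`, then the image of `A` in `G ⧸ N` is an RS-subgroup of `G ⧸ N`. -/
theorem rsSubgroup_quotient {G : Type*} [Group G] (A N : Subgroup G) [N.Normal]
    [Finite N] (hNA : N ≤ A) (hA : IsRSSubgroup A) :
    IsRSSubgroup (A.map (QuotientGroup.mk' N)) := by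
  rintro _ ⟨a, ha, rfl⟩ hfin j hj hcop
  set f := QuotientGroup.mk' N with hf
  have hafin : IsOfFinOrder a := by
    obtain ⟨k, hk, hk1⟩ := isOfFinOrder_iff_pow_eq_one.1 hfin
    have hmem : a ^ k ∈ N := by
      rw [← map_pow] at hk1
      exact (QuotientGroup.eq_one_iff _).1 hk1
    have h1 : IsOfFinOrder (⟨a ^ k, hmem⟩ : N) := isOfFinOrder_of_finite _
    have h2 : IsOfFinOrder (a ^ k) := N.subtype.isOfFinOrder h1
    exact h2.of_pow hk.ne'
  have hdvd : orderOf (f a) ∣ orderOf a := orderOf_map_dvd f a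
  have hm : 0 < orderOf a := hafin.orderOf_pos
  haveI : NeZero (orderOf a) := ⟨hm.ne'⟩
  obtain ⟨u, hu⟩ := ZMod.unitsMap_surjective hdvd (ZMod.unitOfCoprime j hcop)
  have hmod : (u : ZMod (orderOf a)).val ≡ j [MOD orderOf (f a)] := by
    rw [← ZMod.natCast_eq_natCast_iff]
    have h := congrArg Units.val hu
    rw [ZMod.unitsMap_val, ZMod.coe_unitOfCoprime] at h
    rw [ZMod.natCast_val]
    exact h
  have hpow : f a ^ j = f (a ^ ((u : ZMod (orderOf a)).val + orderOf a)) := by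
    rw [pow_add, pow_orderOf_eq_one, mul_one, map_pow]
    exact (pow_eq_pow_iff_modEq.2 hmod).symm
  have hc : Nat.Coprime ((u : ZMod (orderOf a)).val + orderOf a) (orderOf a) := by
    simpa using ZMod.val_coe_unit_coprime u
  rw [hpow, ← map_inv]
  rcases hA a ha hafin _ (by omega) hc with h | h
  · exact Or.inl (f.map_isConj h)
  · exact Or.inr (f.map_isConj h)
end

section
/- If G is a cut-group and N is a finite normal subgroup of G, then the quotient group G/N is a cut-group. -/
/-- A group `G` is a *cut-group* if every central unit of the integral group ring `ℤ[G]`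
is trivial, i.e. of the form `±g` for some `g ∈ G`. -/
def IsCutGroup (G : Type*) [Group G] : Prop :=
  ∀ u : (MonoidAlgebra ℤ G)ˣ,
    (u : MonoidAlgebra ℤ G) ∈ Subring.center (MonoidAlgebra ℤ G) →
    ∃ g : G, (u : MonoidAlgebra ℤ G) = MonoidAlgebra.of ℤ G g ∨
      (u : MonoidAlgebra ℤ G) = -(MonoidAlgebra.of ℤ G g)

namespace CutQ

open MonoidAlgebra

section star
variable {G : Type*} [Group G]

/-- The canonical involution of the integral group ring. -/
noncomputable def st (x : MonoidAlgebra ℤ G) : MonoidAlgebra ℤ G := mapDomain (fun g => g⁻¹) x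

lemma st_add (x y : MonoidAlgebra ℤ G) : st (x + y) = st x + st y := mapDomain_add _ _ _

lemma st_zero : st (0 : MonoidAlgebra ℤ G) = 0 := mapDomain_zero _

lemma st_single (g : G) (r : ℤ) : st (single g r) = single g⁻¹ r := mapDomain_single

lemma st_one : st (1 : MonoidAlgebra ℤ G) = 1 := by simp [one_def, st_single]

lemma st_st (x : MonoidAlgebra ℤ G) : st (st x) = x := by
  induction x using MonoidAlgebra.induction_linear with
  | zero => simp [st_zero]
  | add x y hx hy => simp [st_add, hx, hy]
  | single g r => simp [st_single]

lemma st_mul (x y : MonoidAlgebra ℤ G) : st (x * y) = st y * st x := by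
  induction x using MonoidAlgebra.induction_linear with
  | zero => simp [st_zero]
  | add x x' hx hx' => simp [st_add, hx, hx', add_mul, mul_add]
  | single g r =>
    induction y using MonoidAlgebra.induction_linear with
    | zero => simp [st_zero]
    | add x x' hx hx' => simp [st_add, hx, hx', add_mul, mul_add]
    | single h s => simp [st_single, single_mul_single, mul_comm]

lemma st_sub (x y : MonoidAlgebra ℤ G) : st (x - y) = st x - st y := by
  rw [eq_sub_iff_add_eq, ← st_add, sub_add_cancel]

lemma coeff_st (x : MonoidAlgebra ℤ G) (g : G) : (st x).coeff g = x.coeff g⁻¹ := by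
  have := Finsupp.mapDomain_apply (f := fun g : G => g⁻¹) inv_injective x.coeff g⁻¹
  simpa [st, mapDomain] using this

lemma tr_mul_st (x : MonoidAlgebra ℤ G) :
    (x * st x).coeff 1 = ∑ g ∈ x.coeff.support, x.coeff g ^ 2 := by
  rw [coeff_mul_apply_left]
  simp [Finsupp.sum, coeff_st, sq]

lemma tr_nonneg (x : MonoidAlgebra ℤ G) : 0 ≤ (x * st x).coeff 1 := by
  rw [tr_mul_st]; positivity

lemma eq_zero_of_tr (x : MonoidAlgebra ℤ G) (h : (x * st x).coeff 1 = 0) : x = 0 := by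
  rw [tr_mul_st, Finset.sum_eq_zero_iff_of_nonneg (fun _ _ => sq_nonneg _)] at h
  ext g
  by_contra hg
  exact hg (by simpa using h g (by simpa using hg))

lemma eq_zero_of_mul_st (x : MonoidAlgebra ℤ G) (h : x * st x = 0) : x = 0 :=
  eq_zero_of_tr x (by simp [h])

lemma trivial_of_mul_st (x : MonoidAlgebra ℤ G) (h : x * st x = 1) :
    ∃ g : G, x = of ℤ G g ∨ x = -(of ℤ G g) := by
  classical
  have h1 : ∑ g ∈ x.coeff.support, x.coeff g ^ 2 = 1 := by
    rw [← tr_mul_st, h]; simp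
  have hx : x ≠ 0 := by
    rintro rfl; simp at h1
  obtain ⟨g, hg⟩ : ∃ g, x.coeff g ≠ 0 := by
    by_contra! hc
    exact hx (by ext g; simpa using hc g)
  have hgs : g ∈ x.coeff.support := by simpa using hg
  have hpos : 1 ≤ x.coeff g ^ 2 := by
    have : 0 < x.coeff g ^ 2 := by positivity
    omega
  have hs := Finset.add_sum_erase _ (fun g => x.coeff g ^ 2) hgs
  rw [h1] at hs
  have hn : 0 ≤ ∑ g ∈ x.coeff.support.erase g, x.coeff g ^ 2 :=
    Finset.sum_nonneg fun _ _ => sq_nonneg _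
  have h0 : ∑ g ∈ x.coeff.support.erase g, x.coeff g ^ 2 = 0 := by omega
  have hone : x.coeff g ^ 2 = 1 := by omega
  rw [Finset.sum_eq_zero_iff_of_nonneg (fun _ _ => sq_nonneg _)] at h0
  have hz : ∀ k, k ≠ g → x.coeff k = 0 := by
    intro k hk
    by_contra hc
    exact hc (by simpa using h0 k (by simp [hk, hc]))
  have hxs : x = single g (x.coeff g) := by
    ext k
    by_cases hk : k = g
    · subst hk; simp
    · simp [hz k hk, Ne.symm hk]
  refine ⟨g, ?_⟩
  rcases mul_self_eq_one_iff.1 ((sq (x.coeff g)).symm.trans hone) with h | h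
  · left; rw [hxs, h]; rfl
  · right; rw [hxs, h]; ext k; simp [of, Finsupp.single_neg]

/-- centrality -/
def Cen (x : MonoidAlgebra ℤ G) : Prop := ∀ y, y * x = x * y

lemma Cen.st {x : MonoidAlgebra ℤ G} (h : Cen x) : Cen (st x) := by
  intro y
  have := congrArg CutQ.st (h (CutQ.st y))
  rw [st_mul, st_mul, st_st] at this
  exact this.symm

lemma Cen.mul {x y : MonoidAlgebra ℤ G} (h : Cen x) (h' : Cen y) : Cen (x * y) := by
  intro z
  rw [← mul_assoc, h z, mul_assoc, h' z, mul_assoc]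

lemma Cen.inv {x y : MonoidAlgebra ℤ G} (h : Cen x) (hxy : x * y = 1) : Cen y := by
  intro z
  have hyx : y * x = 1 := by rw [h y, hxy]
  calc z * y = y * x * z * y := by rw [hyx, one_mul]
    _ = y * z * (x * y) := by rw [mul_assoc y x z, ← h z]; simp only [mul_assoc]
    _ = y * z := by rw [hxy, mul_one]

lemma Cen.pow {x : MonoidAlgebra ℤ G} (h : Cen x) (n : ℕ) : Cen (x ^ n) := fun z =>
  (Commute.pow_right (h z : Commute z x) n)

lemma Cen.sub {x y : MonoidAlgebra ℤ G} (h : Cen x) (h' : Cen y) : Cen (x - y) := by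
  intro z; rw [mul_sub, sub_mul, h z, h' z]

lemma Cen.one : Cen (1 : MonoidAlgebra ℤ G) := by intro z; simp

lemma Cen.eq_zero_of_sq {x : MonoidAlgebra ℤ G} (h : Cen x) (hx : x * x = 0) : x = 0 := by
  apply eq_zero_of_mul_st
  apply eq_zero_of_mul_st
  rw [st_mul, st_st, mul_assoc, ← mul_assoc (CutQ.st x), h (CutQ.st x), mul_assoc x, ← mul_assoc,
    hx, zero_mul]

/-- A central idempotent of the integral group ring is trivial. -/
lemma Cen.idem {f : MonoidAlgebra ℤ G} (h : Cen f) (hf : f * f = f) : f = 0 ∨ f = 1 := by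
  classical
  have hss : CutQ.st f * CutQ.st f = CutQ.st f := by rw [← st_mul, hf]
  set p := f * CutQ.st f with hp
  have hps : CutQ.st p = p := by rw [hp, st_mul, st_st]
  have hpp : p * p = p := by
    rw [hp, mul_assoc, ← mul_assoc (CutQ.st f), h (CutQ.st f), mul_assoc, hss, ← mul_assoc, hf]
  have h1 : p.coeff 1 = ∑ g ∈ p.coeff.support, p.coeff g ^ 2 := by
    rw [← tr_mul_st, hps, hpp]
  by_cases hp0 : p = 0
  · left; exact eq_zero_of_mul_st f hp0
  right
  have hp1 : p.coeff 1 ≠ 0 := by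
    intro h0
    exact hp0 (eq_zero_of_tr p (by rw [hps, hpp, h0]))
  have hmem : (1 : G) ∈ p.coeff.support := by simpa using hp1
  have hs := Finset.add_sum_erase _ (fun g => p.coeff g ^ 2) hmem
  rw [← h1] at hs
  have hn : 0 ≤ ∑ g ∈ p.coeff.support.erase 1, p.coeff g ^ 2 :=
    Finset.sum_nonneg fun _ _ => sq_nonneg _
  have hle : p.coeff 1 ^ 2 ≤ p.coeff 1 := by omega
  have hone : p.coeff 1 = 1 := by
    have h3 : 0 < p.coeff 1 := by
      have : 0 < p.coeff 1 ^ 2 := by positivity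
      omega
    nlinarith
  have hpst : p * CutQ.st p = 1 := by
    rw [hps, hpp]
    rw [hone] at hs
    have h0 : ∑ g ∈ p.coeff.support.erase 1, p.coeff g ^ 2 = 0 := by omega
    rw [Finset.sum_eq_zero_iff_of_nonneg (fun _ _ => sq_nonneg _)] at h0
    ext k
    by_cases hk : k = 1
    · subst hk; simp [hone]
    · have : p.coeff k = 0 := by
        by_contra hc
        exact hc (by simpa using h0 k (by simp [hk, hc]))
      simp [this, one_def, Ne.symm hk]
  rw [hps, hpp] at hpst
  calc f = f * p := by rw [hpst, mul_one]
    _ = p := by rw [hp, ← mul_assoc, hf]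
    _ = 1 := hpst

lemma tors {u : MonoidAlgebra ℤ G} (h : Cen u) {k : ℕ} (hk : 0 < k)
    (hw : (u * st u) ^ k = 1) : u * st u = 1 := by
  set w := u * st u with hwdef
  have hwc : Cen w := h.mul h.st
  have hws : st w = w := by rw [hwdef, st_mul, st_st]
  set x := w - 1 with hx
  have hxc : Cen x := hwc.sub Cen.one
  have key : ∑ i ∈ Finset.range k, (u ^ i * x) * st (u ^ i * x) = 0 := by
    have hst : ∀ i : ℕ, st (u ^ i) = st u ^ i := by
      intro i
      induction i with
      | zero => simp [st_one]
      | succ i ih => rw [pow_succ, st_mul, ih, pow_succ']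
    have hterm : ∀ i : ℕ, (u ^ i * x) * st (u ^ i * x) = w ^ i * (x * st x) := by
      intro i
      have hc : Commute u (st u) := (h (st u)).symm
      rw [st_mul, hst, hwdef, hc.mul_pow, mul_assoc, ← mul_assoc x,
        (h.st.pow i) (x * st x), mul_assoc]
    simp_rw [hterm]
    rw [← Finset.sum_mul, ← mul_assoc, hx, geom_sum_mul, hw, sub_self, zero_mul]
  have key2 : ∑ i ∈ Finset.range k, ((u ^ i * x) * st (u ^ i * x)).coeff 1 = 0 := by
    have := congrArg (fun z => z.coeff 1) key
    simpa using this
  rw [Finset.sum_eq_zero_iff_of_nonneg (fun _ _ => tr_nonneg _)] at key2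
  have := eq_zero_of_tr _ (key2 0 (by simpa using hk))
  rw [pow_zero, one_mul] at this
  exact sub_eq_zero.1 this

lemma trivial_of_tors {u : MonoidAlgebra ℤ G} (h : Cen u) {k : ℕ} (hk : 0 < k)
    (hw : (u * st u) ^ k = 1) : ∃ g : G, u = of ℤ G g ∨ u = -(of ℤ G g) :=
  trivial_of_mul_st u (tors h hk hw)

end star

section laurent

lemma domain_unit {D A : Type*} [CommRing D] [IsDomain D] [CommGroup A] [TwoUniqueProds A]
    (f g : MonoidAlgebra D A) (h : f * g = 1) (i j : A) (hij : i ≠ j) :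
    f.coeff i * f.coeff j = 0 := by
  classical
  by_contra hne
  have hi : i ∈ f.coeff.support := by
    simp only [Finsupp.mem_support_iff]; exact left_ne_zero_of_mul hne
  have hj : j ∈ f.coeff.support := by
    simp only [Finsupp.mem_support_iff]; exact right_ne_zero_of_mul hne
  have hg : g.coeff.support.Nonempty := by
    rw [Finsupp.support_nonempty_iff]
    intro h0
    have : g = 0 := by ext; simp [h0]
    rw [this, mul_zero] at h
    exact zero_ne_one h
  have hcard : 1 < f.coeff.support.card * g.coeff.support.card := by
    have h1 : 1 < f.coeff.support.card := Finset.one_lt_card.2 ⟨i, hi, j, hj, hij⟩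
    have h2 := hg.card_pos
    nlinarith
  obtain ⟨⟨a, b⟩, h1, ⟨c, d⟩, h2, hn, hu1, hu2⟩ :=
    TwoUniqueProds.uniqueMul_of_one_lt_card hcard
  simp only [Finset.mem_product, Finsupp.mem_support_iff] at h1 h2
  have e1 := MonoidAlgebra.coeff_mul_mul_of_uniqueMul (f := f) (g := g) hu1
  have e2 := MonoidAlgebra.coeff_mul_mul_of_uniqueMul (f := f) (g := g) hu2
  rw [h] at e1 e2
  have n1 : (1 : MonoidAlgebra D A).coeff (a * b) ≠ 0 := by
    rw [e1]; exact mul_ne_zero h1.1 h1.2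
  have n2 : (1 : MonoidAlgebra D A).coeff (c * d) ≠ 0 := by
    rw [e2]; exact mul_ne_zero h2.1 h2.2
  have hone : ∀ t : A, (1 : MonoidAlgebra D A).coeff t ≠ 0 → t = 1 := by
    intro t ht
    by_contra hc
    exact ht (by simp [one_def, Ne.symm hc])
  have heq : c * d = a * b := by rw [hone _ n1, hone _ n2]
  have := hu1 (a := c) (b := d) (by simp [h2.1]) (by simp [h2.2]) heq
  exact hn (by rw [this.1, this.2])

lemma reduced_unit {C A : Type*} [CommRing C] [IsReduced C] [CommGroup A] [TwoUniqueProds A]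
    (f g : MonoidAlgebra C A) (h : f * g = 1) (i j : A) (hij : i ≠ j) :
    f.coeff i * f.coeff j = 0 := by
  apply IsNilpotent.eq_zero
  rw [nilpotent_iff_mem_prime]
  intro P hP
  rw [← Ideal.Quotient.eq_zero_iff_mem, map_mul]
  have := domain_unit (mapRingHom A (Ideal.Quotient.mk P) f) (mapRingHom A (Ideal.Quotient.mk P) g)
    (by rw [← map_mul, h, map_one]) i j hij
  simpa using this

variable {K A : Type*} [Group K] [CommGroup A]

/-- The grading map attached to a homomorphism `ψ : K → A`. -/
noncomputable def gr (ψ : K →* A) : MonoidAlgebra ℤ K →+* MonoidAlgebra (MonoidAlgebra ℤ K) A :=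
  (MonoidAlgebra.lift ℤ (MonoidAlgebra (MonoidAlgebra ℤ K) A) K
    { toFun := fun g => single (ψ g) (of ℤ K g)
      map_one' := by simp [one_def]
      map_mul' := fun x y => by simp [single_mul_single] }).toRingHom

lemma gr_single (ψ : K →* A) (g : K) (r : ℤ) :
    gr ψ (single g r) = single (ψ g) (single g r) := by
  simp [gr, lift_apply]

lemma coeff_gr [DecidableEq A] (ψ : K →* A) (x : MonoidAlgebra ℤ K) (a : A) (g : K) :
    ((gr ψ x).coeff a).coeff g = if ψ g = a then x.coeff g else 0 := by
  classical
  induction x using MonoidAlgebra.induction_linear with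
  | zero => simp
  | add x y hx hy => simp only [map_add, coeff_add, Finsupp.add_apply, hx, hy]; split_ifs <;> simp
  | single h r =>
    rw [gr_single]
    by_cases h1 : h = g
    · subst h1
      by_cases h2 : ψ h = a
      · simp [h2]
      · simp [h2]
    · by_cases h2 : ψ h = a
      · simp [h2, h1]
      · simp [h2, h1]

lemma sum_gr (ψ : K →* A) (x : MonoidAlgebra ℤ K) :
    ∑ a ∈ (gr ψ x).coeff.support, (gr ψ x).coeff a = x := by
  classical
  ext g
  simp only [coeff_sum, Finsupp.coe_finsetSum, Finset.sum_apply, coeff_gr]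
  rw [Finset.sum_ite_eq]
  split_ifs with h
  · rfl
  · rw [Finsupp.notMem_support_iff] at h
    have := coeff_gr ψ x (ψ g) g
    rw [h] at this
    simpa using this

lemma cen_gr (ψ : K →* A) {x : MonoidAlgebra ℤ K} (hx : Cen x) (a : A) :
    Cen ((gr ψ x).coeff a) := by
  intro y
  induction y using MonoidAlgebra.induction_linear with
  | zero => simp
  | add y z hy hz => rw [add_mul, mul_add, hy, hz]
  | single k r =>
    have h1 := congrArg (gr ψ) (hx (single k r))
    rw [map_mul, map_mul, gr_single] at h1
    have h2 := congrArg (fun z => z.coeff (ψ k * a)) h1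
    simp only [coeff_single_mul_apply, coeff_mul_single_apply] at h2
    simpa [mul_comm] using h2

lemma homogeneous [TwoUniqueProds A] (ψ : K →* A) {u v : MonoidAlgebra ℤ K} (hu : Cen u)
    (huv : u * v = 1) : ∃ a, ∀ g, u.coeff g ≠ 0 → ψ g = a := by
  classical
  have hv : Cen v := hu.inv huv
  let C := Subring.center (MonoidAlgebra ℤ K)
  have hred : IsReduced C := by
    rw [isReduced_iff_pow_one_lt 2 (by norm_num)]
    intro x hx
    have hxc : Cen (x : MonoidAlgebra ℤ K) := Subring.mem_center_iff.1 x.2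
    apply Subtype.ext
    apply hxc.eq_zero_of_sq
    have := congrArg Subtype.val hx
    simpa [sq] using this
  have hlift : ∀ x : MonoidAlgebra ℤ K, Cen x →
      ∃ X : MonoidAlgebra C A, mapRingHom A C.subtype X = gr ψ x := by
    intro x hx
    have : gr ψ x ∈ Set.range (MonoidAlgebra.map (M := A) (C.subtype : C →+ MonoidAlgebra ℤ K)) := by
      rw [range_map]
      intro a
      exact ⟨⟨(gr ψ x).coeff a, Subring.mem_center_iff.2 (cen_gr ψ hx a)⟩, rfl⟩
    exact this
  obtain ⟨U, hU⟩ := hlift u hu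
  obtain ⟨V, hV⟩ := hlift v hv
  have hinj : Function.Injective (mapRingHom A C.subtype) :=
    map_injective (M := A) (C.subtype : C →+ MonoidAlgebra ℤ K) Subtype.val_injective
  have hUV : U * V = 1 := by
    apply hinj
    rw [map_mul, hU, hV, ← map_mul, huv, map_one, map_one]
  have hco : ∀ a, ((U.coeff a : C) : MonoidAlgebra ℤ K) = (gr ψ u).coeff a := by
    intro a; rw [← hU]; simp
  have hort : ∀ a b, a ≠ b → (gr ψ u).coeff a * (gr ψ u).coeff b = 0 := by
    intro a b hab
    have := congrArg Subtype.val (reduced_unit U V hUV a b hab)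
    simpa [hco] using this
  have hsq : ∀ a, (gr ψ u).coeff a * u = (gr ψ u).coeff a * (gr ψ u).coeff a := by
    intro a
    nth_rewrite 2 [← sum_gr ψ u]
    rw [Finset.mul_sum]
    by_cases ha : a ∈ (gr ψ u).coeff.support
    · exact Finset.sum_eq_single a (fun b _ hb => hort a b hb.symm) (fun h => absurd ha h)
    · rw [Finsupp.notMem_support_iff] at ha
      simp [ha]
  have hid : ∀ a, (gr ψ u).coeff a * v = 0 ∨ (gr ψ u).coeff a * v = 1 := by
    intro a
    apply Cen.idem ((cen_gr ψ hu a).mul hv)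
    rw [mul_assoc, ← mul_assoc v, ← hv, mul_assoc, ← mul_assoc, ← hsq, mul_assoc, ← mul_assoc u,
      huv, one_mul]
  by_cases hall : ∀ a, (gr ψ u).coeff a * v = 0
  · exfalso
    have h1 : (1 : MonoidAlgebra ℤ K) = 0 := by
      rw [← huv]
      nth_rewrite 1 [← sum_gr ψ u]
      rw [Finset.sum_mul]
      exact Finset.sum_eq_zero fun a _ => hall a
    exact one_ne_zero h1
  · push Not at hall
    obtain ⟨a, ha⟩ := hall
    have ha1 := (hid a).resolve_left ha
    have hua : (gr ψ u).coeff a = u := by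
      calc (gr ψ u).coeff a = (gr ψ u).coeff a * v * u := by
            rw [mul_assoc, ← hv u, huv, mul_one]
        _ = u := by rw [ha1, one_mul]
    refine ⟨a, fun g hg => ?_⟩
    by_contra hne
    have := coeff_gr ψ u a g
    rw [hua, if_neg hne] at this
    exact hg this

end laurent

section finiteness

open scoped commutatorElement

/-- A group generated by a finite conjugation-invariant set has finitely many commutators. -/
lemma finite_commutatorSet {K : Type*} [Group K] (X : Set K) (hX : X.Finite)
    (hgen : Subgroup.closure X = ⊤) (hconj : ∀ k, ∀ x ∈ X, k * x * k⁻¹ ∈ X) :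
    Finite (commutatorSet K) := by
  have hfin : (Set.range (MulAut.conj : K →* MulAut K)).Finite := by
    have : Finite X := hX
    have hf : Function.Injective (fun c : Set.range (MulAut.conj : K →* MulAut K) =>
        (fun x : X => (⟨c.1 x, by
          obtain ⟨k, hk⟩ := c.2
          rw [← hk]
          exact hconj k x x.2⟩ : X))) := by
      intro c d hcd
      apply Subtype.ext
      have heq : (c.1 : K →* K) = (d.1 : K →* K) := by
        apply MonoidHom.eq_of_eqOn_dense hgen
        intro x hx
        exact congrArg Subtype.val (congrFun hcd ⟨x, hx⟩)
      ext k
      exact DFunLike.congr_fun heq k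
    exact Finite.of_injective _ hf
  have hsub : commutatorSet K ⊆ Set.image2 (fun c d => ⁅Function.invFun MulAut.conj c,
      Function.invFun (MulAut.conj : K → MulAut K) d⁆) (Set.range (MulAut.conj : K →* MulAut K))
      (Set.range (MulAut.conj : K →* MulAut K)) := by
    rintro _ ⟨a, b, rfl⟩
    refine ⟨MulAut.conj a, ⟨a, rfl⟩, MulAut.conj b, ⟨b, rfl⟩, ?_⟩
    have ha := Function.invFun_eq (f := (MulAut.conj : K → MulAut K)) ⟨a, rfl⟩
    have hb := Function.invFun_eq (f := (MulAut.conj : K → MulAut K)) ⟨b, rfl⟩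
    set a' := Function.invFun (MulAut.conj : K → MulAut K) (MulAut.conj a)
    set b' := Function.invFun (MulAut.conj : K → MulAut K) (MulAut.conj b)
    show ⁅a', b'⁆ = ⁅a, b⁆
    have h1 : ⁅a', b'⁆ = ⁅a, b'⁆ := by
      have := DFunLike.congr_fun ha b'
      simp only [MulAut.conj_apply] at this
      rw [commutatorElement_def, this, commutatorElement_def]
    have h2 : ⁅a, b'⁆ = ⁅a, b⁆ := by
      have := DFunLike.congr_fun hb a⁻¹
      simp only [MulAut.conj_apply] at this
      rw [commutatorElement_def, commutatorElement_def, mul_assoc, mul_assoc, ← mul_assoc b', this]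
      simp only [mul_assoc]
    rw [h1, h2]
  exact ((hfin.image2 _ hfin).subset hsub).to_subtype

lemma exists_grading {K : Type*} [Group K] [Group.FG K] [Finite (commutatorSet K)] :
    ∃ (r : ℕ) (ψ : K →* Multiplicative (Fin r →₀ ℤ)), Finite ψ.ker := by
  have hfg : Group.FG (Abelianization K) :=
    Group.fg_of_surjective (f := Abelianization.of) (QuotientGroup.mk'_surjective _)
  have hfg' : AddGroup.FG (Additive (Abelianization K)) := inferInstance
  obtain ⟨r, ι, _, p, hp, e, ⟨E⟩⟩ :=
    AddCommGroup.equiv_free_prod_directSum_zmod (Additive (Abelianization K))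
  have : ∀ i, NeZero (p i ^ e i) := fun i => ⟨pow_ne_zero _ (hp i).ne_zero⟩
  have hF : Finite (DirectSum ι fun i => ZMod (p i ^ e i)) :=
    Finite.of_equiv _ DFinsupp.equivFunOnFintype.symm
  let ψ' : Abelianization K →* Multiplicative (Fin r →₀ ℤ) :=
    AddMonoidHom.toMultiplicativeRight ((AddMonoidHom.fst _ _).comp E.toAddMonoidHom)
  have hψ' : ∀ x, ψ' x = Multiplicative.ofAdd (E (Additive.ofMul x)).1 := fun x => rfl
  refine ⟨r, ψ'.comp Abelianization.of, ?_⟩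
  have hk : Finite ψ'.ker := by
    apply Finite.of_injective (fun x : ψ'.ker => (E (Additive.ofMul x.1)).2)
    intro x y hxy
    apply Subtype.ext
    have hx := x.2
    have hy := y.2
    rw [MonoidHom.mem_ker, hψ'] at hx hy
    have : E (Additive.ofMul x.1) = E (Additive.ofMul y.1) :=
      Prod.ext (Multiplicative.ofAdd.injective (hx.trans hy.symm)) hxy
    exact Additive.ofMul.injective (E.injective this)
  have hc : Finite (Abelianization.of : K →* Abelianization K).ker := by
    rw [Abelianization.ker_of]; infer_instance
  have : ((ψ'.comp Abelianization.of).ker : Set K) =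
      (Abelianization.of : K →* Abelianization K) ⁻¹' (ψ'.ker : Set (Abelianization K)) := by
    ext; simp [MonoidHom.mem_ker]
  have hfin : ((ψ'.comp Abelianization.of).ker : Set K).Finite := by
    rw [this]
    apply Set.Finite.preimage' hk
    intro b _
    by_cases hb : ∃ k, Abelianization.of k = b
    · obtain ⟨k, rfl⟩ := hb
      apply Set.Finite.subset (Set.Finite.image (fun x => k * x)
        (show ((Abelianization.of : K →* Abelianization K).ker : Set K).Finite from hc))
      intro y hy
      refine ⟨k⁻¹ * y, ?_, by simp⟩
      have hy' : Abelianization.of y = Abelianization.of k := hy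
      simp only [SetLike.mem_coe, MonoidHom.mem_ker, map_mul, map_inv, hy', inv_mul_cancel]
    · convert Set.finite_empty
      ext y
      simp only [Set.mem_preimage, Set.mem_singleton_iff, Set.mem_empty_iff_false, iff_false]
      exact fun h => hb ⟨y, h⟩
  exact hfin

lemma exists_pow_mod_of_fg {K : Type*} [Group K] [Group.FG K] [Finite (commutatorSet K)]
    {u v : MonoidAlgebra ℤ K} (hu : Cen u) (huv : u * v = 1) (n : ℕ) [NeZero n] :
    ∃ k : ℕ, 0 < k ∧ (mapRingHom K (Int.castRingHom (ZMod n)) (u * st u)) ^ k = 1 := by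
  classical
  obtain ⟨r, ψ, hψ⟩ := exists_grading (K := K)
  obtain ⟨a, ha⟩ := homogeneous ψ hu huv
  have hsupp : ((u * st u).coeff.support : Set K) ⊆ Set.range ψ.ker.subtype := by
    intro g hg
    have h1 := support_coeff_mul_subset u (st u) hg
    rw [Finset.mem_mul] at h1
    obtain ⟨x, hx, y, hy, rfl⟩ := h1
    rw [Finsupp.mem_support_iff] at hx hy
    rw [coeff_st] at hy
    have e1 := ha _ hx
    have e2 := ha _ hy
    refine ⟨⟨x * y, ?_⟩, rfl⟩
    rw [MonoidHom.mem_ker, map_mul, e1, ← e2, map_inv, inv_mul_cancel]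
  obtain ⟨w', hw'⟩ : ∃ w' : MonoidAlgebra ℤ ψ.ker, mapDomainRingHom ℤ ψ.ker.subtype w' = u * st u :=
    ⟨_, mapDomain_comapDomain hsupp ψ.ker.subtype_injective⟩
  have hfin : Finite (MonoidAlgebra (ZMod n) ψ.ker) :=
    Finite.of_injective (fun x => (x.coeff : ψ.ker → ZMod n))
      (fun x y h => MonoidAlgebra.ext (DFunLike.coe_injective h))
  set z := mapRingHom ψ.ker (Int.castRingHom (ZMod n)) w' with hz
  obtain ⟨i, j, hij, hpow⟩ := Finite.exists_ne_map_eq_of_infinite (fun i : ℕ => z ^ i)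
  have hpush : mapDomainRingHom (ZMod n) ψ.ker.subtype z =
      mapRingHom K (Int.castRingHom (ZMod n)) (u * st u) := by
    rw [hz, ← hw']
    exact (RingHom.congr_fun (mapRingHom_comp_mapDomainRingHom
      (Int.castRingHom (ZMod n)) ψ.ker.subtype) w').symm
  set W := mapRingHom K (Int.castRingHom (ZMod n)) (u * st u) with hW
  have hWpow : W ^ i = W ^ j := by
    have := congrArg (mapDomainRingHom (ZMod n) ψ.ker.subtype) hpow
    simp only [map_pow] at this
    rwa [hpush] at this
  have hunit : IsUnit W := by
    have hvu : v * u = 1 := by rw [hu v, huv]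
    have h1 : IsUnit u := ⟨⟨u, v, huv, hvu⟩, rfl⟩
    have h2 : IsUnit (st u) :=
      ⟨⟨st u, st v, by rw [← st_mul, hvu, st_one], by rw [← st_mul, huv, st_one]⟩, rfl⟩
    exact (h1.mul h2).map _
  have aux : ∀ i j : ℕ, i < j → W ^ i = W ^ j → ∃ k : ℕ, 0 < k ∧ W ^ k = 1 := by
    intro i j hlt h
    refine ⟨j - i, by omega, ?_⟩
    apply (hunit.pow i).mul_left_cancel
    rw [← pow_add, mul_one, h]
    congr 1; omega
  rcases lt_or_gt_of_ne hij with h | h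
  · exact aux i j h hWpow
  · exact aux j i h hWpow.symm

lemma mapDomain_st {K H : Type*} [Group K] [Group H] (f : K →* H) (x : MonoidAlgebra ℤ K) :
    mapDomainRingHom ℤ f (st x) = st (mapDomainRingHom ℤ f x) := by
  induction x using MonoidAlgebra.induction_linear with
  | zero => simp [st_zero]
  | add x y hx hy => simp only [st_add, map_add, hx, hy]
  | single g r => simp [st_single]

lemma Cen.conj {H : Type*} [Group H] {u : MonoidAlgebra ℤ H} (hu : Cen u) (h x : H)
    (hx : u.coeff x ≠ 0) : u.coeff (h * x * h⁻¹) ≠ 0 := by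
  have h1 := congrArg (fun z => z.coeff (h * x)) (hu (single h 1))
  simp only [coeff_single_mul_apply, coeff_mul_single_apply] at h1
  simp only [inv_mul_cancel_left, one_mul, mul_one] at h1
  rwa [← h1]

lemma exists_pow_mod {H : Type*} [Group H]
    {u v : MonoidAlgebra ℤ H} (hu : Cen u) (huv : u * v = 1) (n : ℕ) [NeZero n] :
    ∃ k : ℕ, 0 < k ∧ (mapRingHom H (Int.castRingHom (ZMod n)) (u * st u)) ^ k = 1 := by
  have hv := hu.inv huv
  set X : Set H := u.coeff.support ∪ v.coeff.support with hX
  have hXfin : X.Finite := (Finset.finite_toSet _).union (Finset.finite_toSet _)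
  have hXconj : ∀ h, ∀ x ∈ X, h * x * h⁻¹ ∈ X := by
    rintro h x (hx | hx)
    · left; simp only [Finset.mem_coe, Finsupp.mem_support_iff] at hx ⊢; exact hu.conj h x hx
    · right; simp only [Finset.mem_coe, Finsupp.mem_support_iff] at hx ⊢; exact hv.conj h x hx
  set K := Subgroup.closure X with hK
  have hXK : X ⊆ Set.range K.subtype := by
    intro x hx; exact ⟨⟨x, Subgroup.subset_closure hx⟩, rfl⟩
  have hfg : Group.FG K := by
    rw [Group.fg_iff_subgroup_fg, Subgroup.fg_iff]
    exact ⟨X, rfl, hXfin⟩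
  have hcs : Finite (commutatorSet K) := by
    apply finite_commutatorSet (K.subtype ⁻¹' X) (hXfin.preimage K.subtype_injective.injOn)
    · exact Subgroup.closure_closure_coe_preimage
    · intro k x hx
      exact hXconj k x hx
  have hinj : Function.Injective (mapDomainRingHom ℤ K.subtype) :=
    mapDomain_injective K.subtype_injective
  obtain ⟨u', hu'⟩ : ∃ u' : MonoidAlgebra ℤ K, mapDomainRingHom ℤ K.subtype u' = u :=
    ⟨_, mapDomain_comapDomain (Set.subset_union_left.trans hXK) K.subtype_injective⟩
  obtain ⟨v', hv'⟩ : ∃ v' : MonoidAlgebra ℤ K, mapDomainRingHom ℤ K.subtype v' = v :=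
    ⟨_, mapDomain_comapDomain (Set.subset_union_right.trans hXK) K.subtype_injective⟩
  have huv' : u' * v' = 1 := hinj (by rw [map_mul, hu', hv', huv, map_one])
  have hcen : Cen u' := fun y => hinj (by rw [map_mul, map_mul, hu', hu])
  obtain ⟨k, hk, h⟩ := exists_pow_mod_of_fg hcen huv' n
  refine ⟨k, hk, ?_⟩
  have h2 := congrArg (mapDomainRingHom (ZMod n) K.subtype) h
  rw [map_pow, map_one] at h2
  have h3 := RingHom.congr_fun (mapRingHom_comp_mapDomainRingHom
      (Int.castRingHom (ZMod n)) K.subtype) (u' * st u')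
  simp only [RingHom.comp_apply] at h3
  rw [← h3, map_mul, mapDomain_st, hu'] at h2
  exact h2

end finiteness

section lifting

variable {G : Type*} [Group G] (N : Subgroup G) [N.Normal] [Finite N]

/-- The projection of integral group rings. -/
noncomputable abbrev proj : MonoidAlgebra ℤ G →+* MonoidAlgebra ℤ (G ⧸ N) :=
  mapDomainRingHom ℤ (QuotientGroup.mk' N)

/-- The sum of the elements of `N`. -/
noncomputable def nsum : MonoidAlgebra ℤ G :=
  letI := Fintype.ofFinite N
  ∑ x : N, single (x : G) 1

lemma nsum_cen : Cen (nsum N) := by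
  intro y
  induction y using MonoidAlgebra.induction_linear with
  | zero => simp
  | add y z hy hz => rw [add_mul, mul_add, hy, hz]
  | single g r =>
    letI := Fintype.ofFinite N
    simp only [nsum, Finset.mul_sum, Finset.sum_mul, single_mul_single, mul_one, one_mul]
    refine Fintype.sum_equiv (MulAut.conjNormal (H := N) g).toEquiv _ _ ?_
    intro x
    simp

lemma single_mul_nsum (g : G) (x : N) : single (g * x) (1 : ℤ) * nsum N = single g 1 * nsum N := by
  letI := Fintype.ofFinite N
  simp only [nsum, Finset.mul_sum, single_mul_single, mul_one]
  refine Fintype.sum_equiv (Equiv.mulLeft x) _ _ ?_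
  intro y
  simp [mul_assoc]

lemma proj_nsum : proj N (nsum N) = ((Nat.card N : ℕ) : MonoidAlgebra ℤ (G ⧸ N)) := by
  letI := Fintype.ofFinite N
  have : ∀ x : N, proj N (single (x : G) (1 : ℤ)) = 1 := by
    intro x
    have hx : ((x : G) : G ⧸ N) = 1 := (QuotientGroup.eq_one_iff _).2 x.2
    simp [proj, one_def, hx]
  rw [nsum, map_sum]
  simp only [this]
  simp

lemma mul_nsum_eq_zero {x : MonoidAlgebra ℤ G} (hx : proj N x = 0) : x * nsum N = 0 := by
  let L : MonoidAlgebra ℤ (G ⧸ N) →+ MonoidAlgebra ℤ G :=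
    MonoidAlgebra.liftNC (Int.castAddHom _) (fun q => single q.out (1 : ℤ) * nsum N)
  have hL : ∀ y : MonoidAlgebra ℤ G, L (proj N y) = y * nsum N := by
    intro y
    induction y using MonoidAlgebra.induction_linear with
    | zero => simp
    | add y z hy hz => rw [map_add, map_add, add_mul, hy, hz]
    | single g r =>
      have h1 : proj N (single g r) = single (g : G ⧸ N) r := by simp [proj]
      obtain ⟨n, hn⟩ := QuotientGroup.mk_out_eq_mul N g
      rw [h1]
      simp only [L, liftNC_single]
      rw [hn, single_mul_nsum, ← mul_assoc]
      congr 1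
      simp [intCast_def, single_mul_single]
  rw [← hL, hx, map_zero]

lemma proj_surjective : Function.Surjective (proj N) := by
  intro y
  induction y using MonoidAlgebra.induction_linear with
  | zero => exact ⟨0, map_zero _⟩
  | add y z hy hz =>
    obtain ⟨a, rfl⟩ := hy
    obtain ⟨b, rfl⟩ := hz
    exact ⟨a + b, map_add _ _ _⟩
  | single q r =>
    obtain ⟨g, rfl⟩ := QuotientGroup.mk'_surjective N q
    exact ⟨single g r, by simp [proj]⟩

lemma exists_div {H : Type*} [Group H] (n : ℕ) (x : MonoidAlgebra ℤ H)
    (hx : mapRingHom H (Int.castRingHom (ZMod n)) x = 0) :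
    ∃ y : MonoidAlgebra ℤ H, x = (n : MonoidAlgebra ℤ H) * y := by
  refine ⟨ofCoeff (x.coeff.mapRange (fun a => a / (n : ℤ)) (by simp)), ?_⟩
  ext h
  have h1 := congrArg (fun z => z.coeff h) hx
  simp only [coeff_mapRingHom, coeff_zero, Finsupp.zero_apply] at h1
  have h2 : ((x.coeff h : ℤ) : ZMod n) = 0 := h1
  rw [ZMod.intCast_zmod_eq_zero_iff_dvd] at h2
  rw [natCast_def, coeff_single_one_mul]
  simp only [coeff_ofCoeff, Finsupp.mapRange_apply]
  exact (Int.mul_ediv_cancel' h2).symm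

lemma natCast_mul_inj {H : Type*} [Group H] (n : ℕ) (hn : n ≠ 0) {x y : MonoidAlgebra ℤ H}
    (h : (n : MonoidAlgebra ℤ H) * x = (n : MonoidAlgebra ℤ H) * y) : x = y := by
  ext g
  have h1 := congrArg (fun z => z.coeff g) h
  simp only [natCast_def, coeff_single_one_mul] at h1
  exact mul_left_cancel₀ (by exact_mod_cast hn) h1

/-- Central units congruent to `1` modulo the order of `N` lift to central units. -/
lemma lift_unit (hG : IsCutGroup G) {w w' : MonoidAlgebra ℤ (G ⧸ N)} (hw : Cen w)
    (hww : w * w' = 1)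
    (hmod : mapRingHom (G ⧸ N) (Int.castRingHom (ZMod (Nat.card N))) w = 1) :
    ∃ q : G ⧸ N, w = of ℤ _ q ∨ w = -(of ℤ _ q) := by
  set n := Nat.card N with hn
  have hn0 : n ≠ 0 := Nat.card_pos.ne'
  have hw'c : Cen w' := hw.inv hww
  have hmod' : mapRingHom (G ⧸ N) (Int.castRingHom (ZMod n)) w' = 1 := by
    have := congrArg (mapRingHom (G ⧸ N) (Int.castRingHom (ZMod n))) hww
    rwa [map_mul, hmod, one_mul, map_one] at this
  obtain ⟨y, hy⟩ := exists_div n (w - 1) (by rw [map_sub, hmod, map_one, sub_self])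
  obtain ⟨y', hy'⟩ := exists_div n (w' - 1) (by rw [map_sub, hmod', map_one, sub_self])
  have hyc : ∀ z, z * y = y * z := by
    intro z
    apply natCast_mul_inj n hn0
    have hc := hw.sub Cen.one z
    rw [hy] at hc
    rw [← mul_assoc, ← mul_assoc, ← hc, ← mul_assoc]
    rw [Nat.cast_comm n z]
  have hsum : y + y' + (n : MonoidAlgebra ℤ (G ⧸ N)) * (y * y') = 0 := by
    apply natCast_mul_inj n hn0
    have e1 : w = 1 + (n : MonoidAlgebra ℤ (G ⧸ N)) * y := by rw [← hy]; abel
    have e2 : w' = 1 + (n : MonoidAlgebra ℤ (G ⧸ N)) * y' := by rw [← hy']; abel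
    have e3 : (n : MonoidAlgebra ℤ (G ⧸ N)) * y * (n * y') = n * (n * (y * y')) := by
      rw [mul_assoc, ← mul_assoc y, ← Nat.cast_comm n y, mul_assoc]
    rw [e1, e2, mul_add, add_mul, add_mul, one_mul, one_mul, mul_one, e3] at hww
    rw [mul_zero, mul_add, mul_add]
    rw [← sub_eq_zero] at hww
    rw [← hww]; abel
  obtain ⟨Y, hY⟩ := proj_surjective N y
  obtain ⟨Y', hY'⟩ := proj_surjective N y'
  have hker : ∀ a b : MonoidAlgebra ℤ G, proj N a = proj N b → a * nsum N = b * nsum N := by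
    intro a b hab
    rw [← sub_eq_zero, ← sub_mul]
    exact mul_nsum_eq_zero N (by rw [map_sub, hab, sub_self])
  have hNc := nsum_cen N
  have hmulNN : ∀ a b : MonoidAlgebra ℤ G, (a * nsum N) * (b * nsum N) =
      ((n : MonoidAlgebra ℤ G) * (a * b)) * nsum N := by
    intro a b
    rw [← mul_assoc]
    apply hker
    rw [map_mul, map_mul, map_mul, proj_nsum, map_mul, map_natCast, ← Nat.cast_comm,
      mul_assoc]
  have hcomm : proj N (Y * Y') = proj N (Y' * Y) := by
    rw [map_mul, map_mul, hY, hY', ← hyc y']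
  have hVV : (1 + Y * nsum N) * (1 + Y' * nsum N) = 1 := by
    have h0 : (Y + Y' + (n : MonoidAlgebra ℤ G) * (Y * Y')) * nsum N = 0 := by
      apply mul_nsum_eq_zero
      rw [map_add, map_add, map_mul, map_mul, map_natCast, hY, hY', hsum]
    rw [mul_add, add_mul, add_mul, one_mul, one_mul, mul_one, hmulNN]
    rw [add_mul, add_mul] at h0
    rw [add_assoc, ← add_assoc (Y * nsum N), h0, add_zero]
  have hVc : Cen (1 + Y * nsum N) := by
    intro z
    rw [mul_add, add_mul, mul_one, one_mul, ← mul_assoc, mul_assoc Y, ← hNc z, ← mul_assoc]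
    congr 1
    apply hker
    rw [map_mul, map_mul, hY, hyc]
  let V : (MonoidAlgebra ℤ G)ˣ := ⟨1 + Y * nsum N, 1 + Y' * nsum N, hVV, by rw [hVc, hVV]⟩
  have hproj : proj N (1 + Y * nsum N) = w := by
    rw [map_add, map_one, map_mul, proj_nsum, hY, ← Nat.cast_comm, ← hy]; abel
  have hof : ∀ g : G, proj N (of ℤ G g) = of ℤ (G ⧸ N) (g : G ⧸ N) := by
    intro g; simp [proj, of]
  obtain ⟨g, hg⟩ := hG V (Subring.mem_center_iff.2 hVc)
  refine ⟨(g : G ⧸ N), ?_⟩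
  have hVval : (V : MonoidAlgebra ℤ G) = 1 + Y * nsum N := rfl
  rw [hVval] at hg
  rcases hg with hg | hg
  · left; rw [← hproj, hg, hof]
  · right; rw [← hproj, hg, map_neg, hof]

end lifting

end CutQ

/-- If `G` is a cut-group and `N` is a finite normal subgroup of `G`, then `G ⧸ N`
is a cut-group. -/
theorem isCutGroup_quotient {G : Type*} [Group G] (N : Subgroup G) [N.Normal] [Finite N]
    (hG : IsCutGroup G) : IsCutGroup (G ⧸ N) := by
  intro u hu
  have hc : CutQ.Cen (u : MonoidAlgebra ℤ (G ⧸ N)) := Subring.mem_center_iff.1 hu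
  have : NeZero (Nat.card N) := ⟨Nat.card_pos.ne'⟩
  have huv : (u : MonoidAlgebra ℤ (G ⧸ N)) * (u⁻¹ : (MonoidAlgebra ℤ (G ⧸ N))ˣ) = 1 := u.mul_inv
  have hvu : ((u⁻¹ : (MonoidAlgebra ℤ (G ⧸ N))ˣ) : MonoidAlgebra ℤ (G ⧸ N)) * u = 1 := u.inv_mul
  obtain ⟨k, hk, hmod⟩ := CutQ.exists_pow_mod hc huv (Nat.card N)
  set x : MonoidAlgebra ℤ (G ⧸ N) := (u : MonoidAlgebra ℤ (G ⧸ N)) with hx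
  set y : MonoidAlgebra ℤ (G ⧸ N) := ((u⁻¹ : (MonoidAlgebra ℤ (G ⧸ N))ˣ) : MonoidAlgebra ℤ (G ⧸ N))
  have hwc : CutQ.Cen (x * CutQ.st x) := hc.mul hc.st
  have hww : (x * CutQ.st x) * (CutQ.st y * y) = 1 := by
    rw [mul_assoc, ← mul_assoc (CutQ.st x), ← CutQ.st_mul, hvu, CutQ.st_one, one_mul, huv]
  have hwwk : (x * CutQ.st x) ^ k * (CutQ.st y * y) ^ k = 1 := by
    have hcm : Commute (x * CutQ.st x) (CutQ.st y * y) := (hwc _).symm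
    rw [← hcm.mul_pow, hww, one_pow]
  rw [← map_pow] at hmod
  obtain ⟨q, hq⟩ := CutQ.lift_unit N hG (hwc.pow k) hwwk hmod
  -- the power of the symmetric element is a symmetric trivial unit, so its square is one
  set W := (x * CutQ.st x) ^ k with hW
  have hst : CutQ.st W = W := by
    have h1 : ∀ z : MonoidAlgebra ℤ (G ⧸ N), CutQ.st z = z → ∀ i : ℕ, CutQ.st (z ^ i) = z ^ i := by
      intro z hz i
      induction i with
      | zero => simp [CutQ.st_one]
      | succ i ih => rw [pow_succ, CutQ.st_mul, ih, hz]; exact (pow_mul_comm' z i).symm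
    exact h1 _ (by rw [CutQ.st_mul, CutQ.st_st]) k
  have hWW : W * W = 1 := by
    nth_rewrite 2 [← hst]
    have hone : MonoidAlgebra.of ℤ (G ⧸ N) q * CutQ.st (MonoidAlgebra.of ℤ (G ⧸ N) q) = 1 := by
      rw [MonoidAlgebra.of_apply, CutQ.st_single, MonoidAlgebra.single_mul_single]
      simp [MonoidAlgebra.one_def]
    rcases hq with h | h
    · rw [h, hone]
    · have hneg : CutQ.st (-(MonoidAlgebra.of ℤ (G ⧸ N) q)) =
          -CutQ.st (MonoidAlgebra.of ℤ (G ⧸ N) q) := by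
        have := CutQ.st_sub 0 (MonoidAlgebra.of ℤ (G ⧸ N) q)
        rwa [zero_sub, CutQ.st_zero, zero_sub] at this
      rw [h, hneg, neg_mul_neg, hone]
  exact CutQ.trivial_of_tors hc (k := k * 2) (by omega) (by rw [pow_mul, ← hW, sq, hWW])
end

section
/- Let G be a normal subgroup of a group Π and let Q = Π/G. If Q is a cut-group and no nontrivial element of G is simultaneously a torsion element and an element with only finitely many conjugates in Π (i.e. G ∩ Φ⁺(Π) = {1}), then Π is a cut-group. -/
/-- `Φ⁺(G)`: the set of torsion elements of `G` having only finitely many conjugates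
in `G` (the torsion part of the FC-subgroup of `G`). -/
def FCTorsion (G : Type*) [Group G] : Set G :=
  {g : G | {h : G | IsConj g h}.Finite ∧ IsOfFinOrder g}

open MonoidAlgebra

lemma CutAux.domain {D A : Type*} [CommRing D] [IsDomain D] [Group A] [TwoUniqueProds A]
    (U V : MonoidAlgebra D A) (h : U * V = 1) (a b : A) (hab : a * b ≠ 1) :
    U.coeff a * V.coeff b = 0 := by
  classical
  by_contra hne
  have ha : a ∈ U.coeff.support := by
    rw [Finsupp.mem_support_iff]; exact left_ne_zero_of_mul hne
  have hb : b ∈ V.coeff.support := by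
    rw [Finsupp.mem_support_iff]; exact right_ne_zero_of_mul hne
  have key : ∀ x ∈ U.coeff.support, ∀ y ∈ V.coeff.support,
      UniqueMul U.coeff.support V.coeff.support x y → x * y = 1 := by
    intro x hx y hy hu
    by_contra hxy
    have h1 := coeff_mul_mul_of_uniqueMul hu
    rw [h, one_def, coeff_single, Finsupp.single_apply, if_neg (Ne.symm hxy)] at h1
    rw [Finsupp.mem_support_iff] at hx hy
    exact mul_ne_zero hx hy h1.symm
  by_cases hc : 1 < U.coeff.support.card * V.coeff.support.card
  · obtain ⟨p, hp, q, hq, hpq, up, uq⟩ := TwoUniqueProds.uniqueMul_of_one_lt_card hc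
    rw [Finset.mem_product] at hp hq
    have e1 := key _ hp.1 _ hp.2 up
    have e2 := key _ hq.1 _ hq.2 uq
    have := up hq.1 hq.2 (e2.trans e1.symm)
    exact hpq (Prod.ext this.1.symm this.2.symm)
  · have h1 : 0 < U.coeff.support.card := Finset.card_pos.mpr ⟨a, ha⟩
    have h2 : 0 < V.coeff.support.card := Finset.card_pos.mpr ⟨b, hb⟩
    apply hab
    refine key a ha b hb ?_
    have h3 : U.coeff.support.card ≤ 1 := by nlinarith
    have h4 : V.coeff.support.card ≤ 1 := by nlinarith
    intro x y hx hy _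
    exact ⟨Finset.card_le_one.mp h3 _ hx _ ha, Finset.card_le_one.mp h4 _ hy _ hb⟩

lemma CutAux.reduced {R A : Type*} [CommRing R] [IsReduced R] [Group A] [TwoUniqueProds A]
    (U V : MonoidAlgebra R A) (h : U * V = 1) (a b : A) (hab : a * b ≠ 1) :
    U.coeff a * V.coeff b = 0 := by
  rw [← isNilpotent_iff_eq_zero, nilpotent_iff_mem_prime]
  intro P hP
  have := CutAux.domain (mapRingHom A (Ideal.Quotient.mk P) U)
    (mapRingHom A (Ideal.Quotient.mk P) V) (by rw [← map_mul, h, map_one]) a b hab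
  rwa [coeff_mapRingHom, coeff_mapRingHom, ← map_mul, Ideal.Quotient.eq_zero_iff_mem] at this

lemma CutAux.connected {R A : Type*} [CommRing R] [Nontrivial R] [IsReduced R]
    (hR : ∀ e : R, e * e = e → e = 0 ∨ e = 1) [Group A] [TwoUniqueProds A]
    (U V : MonoidAlgebra R A) (h : U * V = 1) : ∃ a, ∀ b, b ≠ a → U.coeff b = 0 := by
  classical
  have hz := CutAux.reduced U V h
  have hsum : ∑ a ∈ U.coeff.support, U.coeff a * V.coeff a⁻¹ = 1 := by
    have h1 : (U * V).coeff 1 = 1 := by rw [h, one_def, coeff_single, Finsupp.single_eq_same]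
    rw [← h1, coeff_mul, Finsupp.sum]
    refine Finset.sum_congr rfl fun a _ => ?_
    rw [Finsupp.sum, Finset.sum_eq_single a⁻¹]
    · simp
    · intro b _ hb
      rw [if_neg]
      intro h2
      exact hb (eq_inv_of_mul_eq_one_right h2)
    · intro hb
      rw [Finsupp.notMem_support_iff] at hb
      simp [hb]
  have hid : ∀ a, (U.coeff a * V.coeff a⁻¹) * (U.coeff a * V.coeff a⁻¹)
      = U.coeff a * V.coeff a⁻¹ := by
    intro a
    by_cases ha : U.coeff a = 0
    · simp [ha]
    conv_rhs => rw [← mul_one (U.coeff a * V.coeff a⁻¹), ← hsum, Finset.mul_sum]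
    rw [Finset.sum_eq_single a]
    · intro b _ hb
      have : U.coeff a * V.coeff b⁻¹ = 0 := hz _ _ (by
        rw [Ne, mul_inv_eq_one]; exact hb.symm)
      linear_combination (V.coeff a⁻¹ * U.coeff b) * this
    · intro h3
      rw [Finsupp.notMem_support_iff] at h3
      exact absurd h3 ha
  obtain ⟨a, _, ha⟩ : ∃ a ∈ U.coeff.support, U.coeff a * V.coeff a⁻¹ ≠ 0 := by
    by_contra! hcon
    rw [Finset.sum_eq_zero hcon] at hsum
    exact zero_ne_one hsum
  have ha1 := (hR _ (hid a)).resolve_left ha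
  refine ⟨a, fun b hb => ?_⟩
  have : U.coeff b * V.coeff a⁻¹ = 0 := hz _ _ (by rw [Ne, mul_inv_eq_one]; exact hb)
  linear_combination (-U.coeff b) * ha1 + U.coeff a * this

/-- The canonical involution of the integral group ring. -/
noncomputable def CutAux.st {G : Type*} [Group G] (x : MonoidAlgebra ℤ G) : MonoidAlgebra ℤ G :=
  mapDomain (fun g => g⁻¹) x

lemma CutAux.st_coeff {G : Type*} [Group G] (x : MonoidAlgebra ℤ G) (g : G) :
    (CutAux.st x).coeff g = x.coeff g⁻¹ := by
  have := Finsupp.mapDomain_apply (inv_injective (G := G)) x.coeff g⁻¹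
  rw [inv_inv] at this
  exact this

lemma CutAux.st_add {G : Type*} [Group G] (x y : MonoidAlgebra ℤ G) :
    CutAux.st (x + y) = CutAux.st x + CutAux.st y := mapDomain_add _ _ _

lemma CutAux.st_sub {G : Type*} [Group G] (x y : MonoidAlgebra ℤ G) :
    CutAux.st (x - y) = CutAux.st x - CutAux.st y := by
  rw [eq_sub_iff_add_eq, ← CutAux.st_add, sub_add_cancel]

lemma CutAux.st_st {G : Type*} [Group G] (x : MonoidAlgebra ℤ G) :
    CutAux.st (CutAux.st x) = x := by
  ext g
  rw [CutAux.st_coeff, CutAux.st_coeff, inv_inv]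

lemma CutAux.st_mul {G : Type*} [Group G] (x y : MonoidAlgebra ℤ G) :
    CutAux.st (x * y) = CutAux.st y * CutAux.st x := by
  induction x using MonoidAlgebra.induction_linear with
  | zero => simp [CutAux.st]
  | add a b ha hb => rw [add_mul, CutAux.st_add, ha, hb, CutAux.st_add, mul_add]
  | single g r =>
    induction y using MonoidAlgebra.induction_linear with
    | zero => simp [CutAux.st]
    | add a b ha hb => rw [mul_add, CutAux.st_add, ha, hb, CutAux.st_add, add_mul]
    | single h s =>
      simp only [CutAux.st, single_mul_single, mapDomain_single, mul_inv_rev, mul_comm r s]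

lemma CutAux.st_center {G : Type*} [Group G] {x : MonoidAlgebra ℤ G}
    (hx : x ∈ Subring.center (MonoidAlgebra ℤ G)) :
    CutAux.st x ∈ Subring.center (MonoidAlgebra ℤ G) := by
  rw [Subring.mem_center_iff] at hx ⊢
  intro y
  rw [← CutAux.st_st y, ← CutAux.st_mul, ← CutAux.st_mul, hx]

lemma CutAux.trace {G : Type*} [Group G] (x : MonoidAlgebra ℤ G) :
    (x * CutAux.st x).coeff 1 = ∑ g ∈ x.coeff.support, x.coeff g ^ 2 := by
  classical
  rw [coeff_mul, Finsupp.sum]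
  refine Finset.sum_congr rfl fun a _ => ?_
  rw [Finsupp.sum, Finset.sum_eq_single a⁻¹]
  · simp [CutAux.st_coeff, sq]
  · intro b _ hb
    rw [if_neg]
    intro h2
    exact hb (eq_inv_of_mul_eq_one_right h2)
  · intro hb
    rw [Finsupp.notMem_support_iff] at hb
    simp [hb]

lemma CutAux.eq_zero_of_trace {G : Type*} [Group G] (x : MonoidAlgebra ℤ G)
    (h : (x * CutAux.st x).coeff 1 = 0) : x = 0 := by
  rw [CutAux.trace, Finset.sum_eq_zero_iff_of_nonneg (fun _ _ => sq_nonneg _)] at h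
  ext g
  by_contra hg
  have := h g (Finsupp.mem_support_iff.mpr hg)
  exact hg (by simpa using this)

lemma CutAux.eq_zero_of_mul_st {G : Type*} [Group G] (x : MonoidAlgebra ℤ G)
    (h : x * CutAux.st x = 0) : x = 0 :=
  CutAux.eq_zero_of_trace x (by rw [h]; rfl)

instance CutAux.isReduced_center {G : Type*} [Group G] :
    IsReduced (Subring.center (MonoidAlgebra ℤ G)) := by
  rw [isReduced_iff_pow_one_lt 2 one_lt_two]
  rintro ⟨z, hz⟩ h
  have h0 : z * z = 0 := by
    have := congrArg Subtype.val h
    simpa [sq] using this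
  have hs := Subring.mem_center_iff.mp (CutAux.st_center hz)
  have h1 : z * CutAux.st z = 0 := by
    apply CutAux.eq_zero_of_mul_st
    rw [CutAux.st_mul, CutAux.st_st, mul_assoc, ← mul_assoc _ z, ← hs z, mul_assoc z, ← mul_assoc,
      h0, zero_mul]
  exact Subtype.ext (CutAux.eq_zero_of_mul_st z h1)

lemma CutAux.idem_center {G : Type*} [Group G] (e : Subring.center (MonoidAlgebra ℤ G))
    (he : e * e = e) : e = 0 ∨ e = 1 := by
  classical
  obtain ⟨e, hz⟩ := e
  have h0 : e * e = e := congrArg Subtype.val he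
  have hs := Subring.mem_center_iff.mp (CutAux.st_center hz)
  have hss : CutAux.st e * CutAux.st e = CutAux.st e := by rw [← CutAux.st_mul, h0]
  have h1 : e = e * CutAux.st e := by
    rw [← sub_eq_zero]
    apply CutAux.eq_zero_of_mul_st
    rw [CutAux.st_sub, CutAux.st_mul, CutAux.st_st]
    have e1 : e * CutAux.st e * (e * CutAux.st e) = e * CutAux.st e := by
      rw [mul_assoc, ← mul_assoc _ e, ← hs e, mul_assoc e, hss, ← mul_assoc, h0]
    rw [sub_mul, mul_sub, mul_sub, e1, ← mul_assoc, h0, mul_assoc, hss]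
    simp
  have h2 : e.coeff 1 = ∑ g ∈ e.coeff.support, e.coeff g ^ 2 := by
    rw [← CutAux.trace, ← h1]
  by_cases h3 : e.coeff 1 = 0
  · left
    apply Subtype.ext
    refine CutAux.eq_zero_of_trace e ?_
    rw [← h1, h3]
  · right
    apply Subtype.ext
    rw [← Finset.add_sum_erase _ _ (Finsupp.mem_support_iff.mpr h3)] at h2
    have h4 : 0 ≤ ∑ g ∈ e.coeff.support.erase 1, e.coeff g ^ 2 :=
      Finset.sum_nonneg fun _ _ => sq_nonneg _
    have h5 : e.coeff 1 = 1 := by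
      have a1 : e.coeff 1 ^ 2 ≤ e.coeff 1 := by linarith
      have a2 : 0 ≤ e.coeff 1 := by nlinarith [sq_nonneg (e.coeff 1)]
      have a3 : 0 < e.coeff 1 := lt_of_le_of_ne a2 (Ne.symm h3)
      nlinarith
    have h6 : ∑ g ∈ e.coeff.support.erase 1, e.coeff g ^ 2 = 0 := by rw [h5] at h2; linarith
    rw [Finset.sum_eq_zero_iff_of_nonneg (fun _ _ => sq_nonneg _)] at h6
    show e = 1
    ext g
    rw [one_def, coeff_single, Finsupp.single_apply]
    split_ifs with h7
    · rw [← h7, h5]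
    · by_contra hg
      have := h6 g (Finset.mem_erase.mpr ⟨Ne.symm h7, Finsupp.mem_support_iff.mpr hg⟩)
      exact hg (by simpa using this)

lemma CutAux.mem_center_iff {G : Type*} [Group G] (x : MonoidAlgebra ℤ G) :
    x ∈ Subring.center (MonoidAlgebra ℤ G) ↔ ∀ g h : G, x.coeff (g * h * g⁻¹) = x.coeff h := by
  rw [Subring.mem_center_iff]
  constructor
  · intro hx g h
    have := congrArg (fun y => y.coeff (g * h)) (hx (single g 1))
    simpa [coeff_mul_single_apply, coeff_single_mul_apply] using this.symm
  · intro hx y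
    induction y using MonoidAlgebra.induction_linear with
    | zero => simp
    | add a b ha hb => rw [add_mul, mul_add, ha, hb]
    | single g r =>
      ext h
      rw [coeff_mul_single_apply, coeff_single_mul_apply, mul_comm, ← hx g (g⁻¹ * h)]
      simp

/-- The coaction `h ↦ h ⊗ φ h`. -/
noncomputable def CutAux.delta {H A : Type*} [Group H] [Group A] (φ : H →* A) :
    MonoidAlgebra ℤ H →+* MonoidAlgebra (MonoidAlgebra ℤ H) A :=
  liftNCRingHom (Int.castRingHom _)
    { toFun := fun h => single (φ h) (single h 1)
      map_one' := by rw [map_one]; rfl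
      map_mul' := fun a b => by rw [map_mul, single_mul_single, single_mul_single, one_mul] }
    (fun x y => Int.cast_commute x _)

lemma CutAux.delta_coeff {H A : Type*} [Group H] [Group A] [DecidableEq A] (φ : H →* A)
    (x : MonoidAlgebra ℤ H) (a : A) (h : H) :
    ((CutAux.delta φ x).coeff a).coeff h = if φ h = a then x.coeff h else 0 := by
  classical
  induction x using MonoidAlgebra.induction_linear with
  | zero => simp
  | add x y hx hy =>
    rw [map_add, coeff_add, Finsupp.add_apply, coeff_add, Finsupp.add_apply, hx, hy, coeff_add,
      Finsupp.add_apply]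
    split_ifs <;> simp
  | single g r =>
    have : CutAux.delta φ (single g r) = single (φ g) (single g r) := by
      rw [CutAux.delta, liftNCRingHom_single]
      simp only [MonoidHom.coe_mk, OneHom.coe_mk, eq_intCast, ← zsmul_eq_mul]
      ext a b
      simp [Finsupp.single_apply]
    rw [this, coeff_single, coeff_single, Finsupp.single_apply, Finsupp.single_apply]
    by_cases h1 : g = h
    · subst h1
      by_cases h2 : φ g = a <;> simp [h2]
    · split_ifs <;> simp [h1]

lemma CutAux.homogeneous {H A : Type*} [Group H] [CommGroup A] [TwoUniqueProds A] (φ : H →* A)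
    (u v : MonoidAlgebra ℤ H) (hu : u ∈ Subring.center (MonoidAlgebra ℤ H))
    (hv : v ∈ Subring.center (MonoidAlgebra ℤ H)) (huv : u * v = 1) :
    ∃ a, ∀ h, u.coeff h ≠ 0 → φ h = a := by
  classical
  have key : ∀ x ∈ Subring.center (MonoidAlgebra ℤ H),
      ∃ X : MonoidAlgebra (Subring.center (MonoidAlgebra ℤ H)) A,
        mapRingHom A (Subring.center (MonoidAlgebra ℤ H)).subtype X = CutAux.delta φ x := by
    intro x hx
    have hr : CutAux.delta φ x ∈ Set.range (map (M := A)
        ((Subring.center (MonoidAlgebra ℤ H)).subtype :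
          Subring.center (MonoidAlgebra ℤ H) →+ MonoidAlgebra ℤ H)) := by
      rw [range_map]
      intro a
      refine ⟨⟨(CutAux.delta φ x).coeff a, ?_⟩, rfl⟩
      rw [CutAux.mem_center_iff] at hx ⊢
      intro g h
      rw [CutAux.delta_coeff, CutAux.delta_coeff, hx]
      simp
    exact hr
  obtain ⟨U, hU⟩ := key u hu
  obtain ⟨V, hV⟩ := key v hv
  have hUV : U * V = 1 := by
    apply map_injective ((Subring.center (MonoidAlgebra ℤ H)).subtype :
          Subring.center (MonoidAlgebra ℤ H) →+ MonoidAlgebra ℤ H) Subtype.val_injective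
    show mapRingHom A (Subring.center (MonoidAlgebra ℤ H)).subtype _ =
      mapRingHom A (Subring.center (MonoidAlgebra ℤ H)).subtype _
    rw [map_mul, hU, hV, ← map_mul, huv, map_one, map_one]
  obtain ⟨a, ha⟩ := CutAux.connected CutAux.idem_center U V hUV
  refine ⟨a, fun h hh => ?_⟩
  by_contra hne
  apply hh
  have h1 := CutAux.delta_coeff φ u (φ h) h
  rw [← hU, coeff_mapRingHom, ha _ hne, if_pos rfl] at h1
  simpa using h1.symm

lemma CutAux.center_finiteIndex {H : Type*} [Group H] (S : Set H) (hS : S.Finite)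
    (hconj : ∀ g, ∀ s ∈ S, g * s * g⁻¹ ∈ S) (hcl : Subgroup.closure S = ⊤) :
    (Subgroup.center H).FiniteIndex := by
  have : Finite S := hS
  let F : H ⧸ Subgroup.center H → (S → S) := fun q s =>
    ⟨q.out * s * q.out⁻¹, hconj _ _ s.2⟩
  have hF : Function.Injective F := by
    intro p q hpq
    have hcen : ∀ x : H, (∀ s ∈ S, s * x = x * s) → x ∈ Subgroup.center H := by
      intro x hx
      rw [← Subgroup.centralizer_univ, ← Subgroup.coe_top, ← hcl, Subgroup.centralizer_closure,
        Subgroup.mem_centralizer_iff]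
      exact hx
    have hc : p.out⁻¹ * q.out ∈ Subgroup.center H := by
      apply hcen
      intro s hs
      have h1 : p.out * s * p.out⁻¹ = q.out * s * q.out⁻¹ :=
        congrArg Subtype.val (congrFun hpq ⟨s, hs⟩)
      have h2 : p.out * s = q.out * s * q.out⁻¹ * p.out := by rw [← h1]; group
      calc s * (p.out⁻¹ * q.out) = p.out⁻¹ * (p.out * s) * p.out⁻¹ * q.out := by group
        _ = p.out⁻¹ * q.out * s := by rw [h2]; group
    rw [← QuotientGroup.eq] at hc
    rwa [QuotientGroup.out_eq', QuotientGroup.out_eq'] at hc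
  have : Finite (H ⧸ Subgroup.center H) := Finite.of_injective F hF
  exact Subgroup.finiteIndex_of_finite_quotient

lemma CutAux.torsion_of_unit {H : Type*} [Group H] [Group.FG H] [(Subgroup.center H).FiniteIndex]
    (u v : MonoidAlgebra ℤ H) (hu : u ∈ Subring.center (MonoidAlgebra ℤ H))
    (hv : v ∈ Subring.center (MonoidAlgebra ℤ H)) (huv : u * v = 1)
    (g h : H) (hg : u.coeff g ≠ 0) (hh : u.coeff h ≠ 0) : IsOfFinOrder (g * h⁻¹) := by
  letI : CommGroup (Subgroup.center H) :=
    { (inferInstance : Group (Subgroup.center H)) with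
      mul_comm := fun a b => Subtype.ext (Subgroup.mem_center_iff.mp b.2 a) }
  have : Group.FG (Subgroup.center H) := inferInstance
  have : Group.FG (Subgroup.center H ⧸ CommGroup.torsion (Subgroup.center H)) := inferInstance
  have : Monoid.FG (Subgroup.center H ⧸ CommGroup.torsion (Subgroup.center H)) := Group.fg_iff_monoid_fg.mp this
  let φ : H →* Subgroup.center H ⧸ CommGroup.torsion (Subgroup.center H) :=
    (QuotientGroup.mk' (CommGroup.torsion (Subgroup.center H))).comp (MonoidHom.transferCenterPow H)
  obtain ⟨a, ha⟩ := CutAux.homogeneous φ u v hu hv huv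
  have h1 : φ (g * h⁻¹) = 1 := by rw [map_mul, map_inv, ha g hg, ha h hh, mul_inv_cancel]
  have h2 : MonoidHom.transferCenterPow H (g * h⁻¹) ∈ CommGroup.torsion (Subgroup.center H) :=
    (QuotientGroup.eq_one_iff _).mp h1
  have h3 : IsOfFinOrder (MonoidHom.transferCenterPow H (g * h⁻¹)) := h2
  have h4 : IsOfFinOrder ((g * h⁻¹) ^ (Subgroup.center H).index) := by
    rw [← MonoidHom.transferCenterPow_apply]
    exact (Subgroup.center H).subtype.isOfFinOrder h3
  exact h4.of_pow Subgroup.FiniteIndex.index_ne_zero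

lemma CutAux.fcTorsion_of_unit {Γ : Type*} [Group Γ]
    (u v : MonoidAlgebra ℤ Γ) (hu : u ∈ Subring.center (MonoidAlgebra ℤ Γ))
    (hv : v ∈ Subring.center (MonoidAlgebra ℤ Γ)) (huv : u * v = 1)
    (g h : Γ) (hg : u.coeff g ≠ 0) (hh : u.coeff h ≠ 0) : g * h⁻¹ ∈ FCTorsion Γ := by
  classical
  have hu' := (CutAux.mem_center_iff u).mp hu
  have hv' := (CutAux.mem_center_iff v).mp hv
  refine ⟨?_, ?_⟩
  · refine ((u.coeff.support ×ˢ u.coeff.support).image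
      (fun p : Γ × Γ => p.1 * p.2⁻¹)).finite_toSet.subset ?_
    intro x hx
    obtain ⟨c, rfl⟩ := isConj_iff.mp hx
    rw [Finset.mem_coe, Finset.mem_image]
    refine ⟨(c * g * c⁻¹, c * h * c⁻¹), ?_, by group⟩
    rw [Finset.mem_product, Finsupp.mem_support_iff, Finsupp.mem_support_iff, hu', hu']
    exact ⟨hg, hh⟩
  · let S : Set Γ := {x | u.coeff x ≠ 0} ∪ {x | v.coeff x ≠ 0}
    have hSf : S.Finite := by
      refine (u.coeff.support ∪ v.coeff.support).finite_toSet.subset ?_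
      intro x hx
      simpa [S] using hx
    have hSc : ∀ c, ∀ s ∈ S, c * s * c⁻¹ ∈ S := by
      intro c s hs
      simpa [S, hu', hv'] using hs
    let H := Subgroup.closure S
    let ι : MonoidAlgebra ℤ H →+* MonoidAlgebra ℤ Γ := mapDomainRingHom ℤ H.subtype
    have hι : Function.Injective ι := mapDomain_injective Subtype.val_injective
    have lift : ∀ x : MonoidAlgebra ℤ Γ, (∀ y, x.coeff y ≠ 0 → y ∈ S) →
        ∃ x' : MonoidAlgebra ℤ H, ι x' = x := by
      intro x hx
      refine ⟨comapDomain H.subtype Subtype.val_injective x, mapDomain_comapDomain ?_ _⟩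
      intro y hy
      have hyH : y ∈ H := Subgroup.subset_closure (hx y (Finsupp.mem_support_iff.mp hy))
      exact ⟨⟨y, hyH⟩, rfl⟩
    have cen : ∀ x', ι x' ∈ Subring.center (MonoidAlgebra ℤ Γ) →
        x' ∈ Subring.center (MonoidAlgebra ℤ H) := by
      intro x' hx
      rw [Subring.mem_center_iff] at hx ⊢
      intro y
      apply hι
      rw [map_mul, map_mul, hx]
    have hcoeff : ∀ (x' : MonoidAlgebra ℤ H) (y : H), (ι x').coeff y = x'.coeff y := by
      intro x' y
      exact Finsupp.mapDomain_apply Subtype.val_injective x'.coeff y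
    obtain ⟨u', hu0⟩ := lift u (fun y hy => Or.inl hy)
    obtain ⟨v', hv0⟩ := lift v (fun y hy => Or.inr hy)
    have hfi : (Subgroup.center H).FiniteIndex := by
      refine CutAux.center_finiteIndex ((fun x : H => (x : Γ)) ⁻¹' S)
        (hSf.preimage Subtype.val_injective.injOn) ?_ Subgroup.closure_closure_coe_preimage
      intro c s hs
      exact hSc _ _ hs
    have hfg : Group.FG H := by
      have : Finite S := hSf
      exact Group.closure_finite_fg S
    have hgH : g ∈ H := Subgroup.subset_closure (Or.inl hg)
    have hhH : h ∈ H := Subgroup.subset_closure (Or.inl hh)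
    have := CutAux.torsion_of_unit u' v' (cen _ (hu0 ▸ hu)) (cen _ (hv0 ▸ hv))
      (hι (by rw [map_mul, hu0, hv0, huv, map_one])) ⟨g, hgH⟩ ⟨h, hhH⟩
      (by rw [← hcoeff, hu0]; exact hg) (by rw [← hcoeff, hu0]; exact hh)
    exact H.subtype.isOfFinOrder this

/-- If `G` is a normal subgroup of `Γ` such that `Γ ⧸ G` is a cut-group and
`G ∩ Φ⁺(Γ) = {1}`, then `Γ` is a cut-group. -/
theorem isCutGroup_of_quotient_isCutGroup {Γ : Type*} [Group Γ] (G : Subgroup Γ) [G.Normal]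
    (hQ : IsCutGroup (Γ ⧸ G))
    (hfc : ∀ g : Γ, g ∈ G → g ∈ FCTorsion Γ → g = 1) :
    IsCutGroup Γ := by
  classical
  intro u hu
  let π : MonoidAlgebra ℤ Γ →+* MonoidAlgebra ℤ (Γ ⧸ G) := mapDomainRingHom ℤ (QuotientGroup.mk' G)
  have hv : ((u⁻¹ : (MonoidAlgebra ℤ Γ)ˣ) : MonoidAlgebra ℤ Γ) ∈
      Subring.center (MonoidAlgebra ℤ Γ) := by
    rw [Subring.mem_center_iff] at hu ⊢
    intro y
    exact (Commute.units_inv_right (hu y : Commute y u))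
  have hinj : ∀ g h : Γ, (u : MonoidAlgebra ℤ Γ).coeff g ≠ 0 →
      (u : MonoidAlgebra ℤ Γ).coeff h ≠ 0 → (g : Γ ⧸ G) = h → g = h := by
    intro g h hg hh hgh
    have h1 := CutAux.fcTorsion_of_unit _ _ hu hv u.mul_inv g h hg hh
    rw [← mul_inv_eq_one]
    refine hfc _ ?_ h1
    rw [← QuotientGroup.eq_one_iff, QuotientGroup.mk_mul, QuotientGroup.mk_inv, hgh,
      mul_inv_cancel]
  have hπs : Function.Surjective π := by
    intro y
    induction y using MonoidAlgebra.induction_linear with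
    | zero => exact ⟨0, map_zero _⟩
    | add a b ha hb =>
      obtain ⟨a, rfl⟩ := ha
      obtain ⟨b, rfl⟩ := hb
      exact ⟨a + b, map_add _ _ _⟩
    | single q r =>
      obtain ⟨g, rfl⟩ := QuotientGroup.mk_surjective q
      exact ⟨single g r, mapDomain_single⟩
  have hπc : π u ∈ Subring.center (MonoidAlgebra ℤ (Γ ⧸ G)) := by
    rw [Subring.mem_center_iff] at hu ⊢
    intro y
    obtain ⟨y, rfl⟩ := hπs y
    rw [← map_mul, ← map_mul, hu]
  have hcoeff : ∀ g, (u : MonoidAlgebra ℤ Γ).coeff g ≠ 0 →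
      (π u).coeff (g : Γ ⧸ G) = (u : MonoidAlgebra ℤ Γ).coeff g := by
    intro g hg
    have h1 : (π u).coeff = Finsupp.mapDomain (QuotientGroup.mk' G)
      (u : MonoidAlgebra ℤ Γ).coeff := rfl
    rw [h1, Finsupp.mapDomain, Finsupp.sum_apply, Finsupp.sum, Finset.sum_eq_single g]
    · simp
    · intro b hb hbg
      rw [Finsupp.single_apply, if_neg]
      intro h2
      exact hbg (hinj b g (Finsupp.mem_support_iff.mp hb) hg h2)
    · intro h2
      exact absurd (Finsupp.mem_support_iff.mpr hg) h2
  have hne : (u : MonoidAlgebra ℤ Γ) ≠ 0 := u.ne_zero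
  obtain ⟨g, hg⟩ : ∃ g, (u : MonoidAlgebra ℤ Γ).coeff g ≠ 0 := by
    by_contra! hcon
    exact hne (by ext g; exact hcon g)
  -- general conclusion from a monomial image
  have key : ∀ (q : Γ ⧸ G) (ε : ℤ), π u = single q ε → (u : MonoidAlgebra ℤ Γ) = single g ε := by
    intro q ε hq
    have hall : ∀ h, (u : MonoidAlgebra ℤ Γ).coeff h ≠ 0 →
        (h : Γ ⧸ G) = q ∧ (u : MonoidAlgebra ℤ Γ).coeff h = ε := by
      intro h hh
      have h1 := hcoeff h hh
      rw [hq, coeff_single, Finsupp.single_apply] at h1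
      split_ifs at h1 with h2
      · exact ⟨h2.symm, h1.symm⟩
      · exact absurd h1.symm hh
    ext h
    rw [coeff_single, Finsupp.single_apply]
    split_ifs with h2
    · rw [← h2]; exact (hall g hg).2
    · by_contra hh
      exact h2 (hinj g h hg hh ((hall g hg).1.trans (hall h hh).1.symm))
  refine ⟨g, ?_⟩
  obtain ⟨q, hq | hq⟩ := hQ (Units.map (π : MonoidAlgebra ℤ Γ →* MonoidAlgebra ℤ (Γ ⧸ G)) u) hπc
  · left
    exact key q 1 hq
  · right
    rw [key q (-1) (hq.trans (by rw [of_apply, ← single_neg])), of_apply, ← single_neg]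
end

section
/- Let G be a normal subgroup of a group Π and let Q = Π/G. Suppose that Q has no nontrivial torsion element with only finitely many conjugates in Q (i.e. Φ⁺(Q) = {1}), and that every torsion element of G having only finitely many conjugates in G is an RS-element of Π (i.e. Φ⁺(G) is an RS-subgroup of Π). Then Π is a cut-group. -/
namespace CutAux
open MonoidAlgebra
variable {G : Type*} [Group G]

/-- The canonical involution. -/
noncomputable def st_s3 (a : MonoidAlgebra ℤ G) : MonoidAlgebra ℤ G := mapDomain (·⁻¹) a

lemma st_single (g : G) (r : ℤ) : st_s3 (single g r) = single g⁻¹ r := by simp [st_s3]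
lemma st_add_s3 (a b : MonoidAlgebra ℤ G) : st_s3 (a + b) = st_s3 a + st_s3 b := mapDomain_add _ _ _
lemma st_zero : st_s3 (0 : MonoidAlgebra ℤ G) = 0 := by simp [st_s3]
lemma st_one : st_s3 (1 : MonoidAlgebra ℤ G) = 1 := by simp [one_def, st_single]
lemma st_mul_s3 (a b : MonoidAlgebra ℤ G) : st_s3 (a * b) = st_s3 b * st_s3 a := by
  induction a using induction_linear with
  | zero => simp [st_zero]
  | add x y hx hy => simp [add_mul, st_add_s3, mul_add, hx, hy]
  | single g r =>
    induction b using induction_linear with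
    | zero => simp [st_zero]
    | add x y hx hy => simp [add_mul, st_add_s3, mul_add, hx, hy]
    | single h s => simp [st_single, single_mul_single, mul_comm]

lemma st_coeff_s3 (a : MonoidAlgebra ℤ G) (g : G) : (st_s3 a).coeff g = a.coeff g⁻¹ := by
  induction a using induction_linear with
  | zero => simp [st_zero]
  | add x y hx hy => simp [st_add_s3, hx, hy]
  | single h r => 
    classical
    simp [st_single, Finsupp.single_apply, inv_eq_iff_eq_inv]

lemma st_st_s3 (a : MonoidAlgebra ℤ G) : st_s3 (st_s3 a) = a := by
  ext g; simp [st_coeff_s3]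

lemma coeff_mul_st (a b : MonoidAlgebra ℤ G) :
    (a * st_s3 b).coeff 1 = a.coeff.sum fun g r => r * b.coeff g := by
  classical
  induction a using induction_linear with
  | zero => simp
  | add x y hx hy =>
    rw [add_mul, coeff_add, Finsupp.add_apply, hx, hy, coeff_add, Finsupp.sum_add_index'] <;>
      simp [add_mul]
  | single g r =>
    simp [coeff_single_mul_apply, st_coeff_s3]

lemma eq_zero_of_mul_st_s3 (a : MonoidAlgebra ℤ G) (h : (a * st_s3 a).coeff 1 = 0) : a = 0 := by
  rw [coeff_mul_st, Finsupp.sum, Finset.sum_eq_zero_iff_of_nonneg (fun _ _ => mul_self_nonneg _)] at h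
  ext g
  by_contra hg
  exact hg (by simpa using h g (by simpa using hg))

lemma trivial_of_mul_st (a : MonoidAlgebra ℤ G) (h : a * st_s3 a = 1) :
    ∃ g : G, a = of ℤ G g ∨ a = -(of ℤ G g) := by
  classical
  have h1 : (a * st_s3 a).coeff 1 = 1 := by rw [h]; simp
  rw [coeff_mul_st, Finsupp.sum] at h1
  have hne : a.coeff.support.Nonempty := by
    by_contra hne
    rw [Finset.not_nonempty_iff_eq_empty] at hne
    simp [hne] at h1
  obtain ⟨g, hg⟩ := hne
  rw [← Finset.add_sum_erase _ _ hg] at h1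
  have hg0 : a.coeff g ≠ 0 := by simpa using hg
  have hpos : 0 < a.coeff g * a.coeff g := mul_self_pos.mpr hg0
  have hnn : 0 ≤ ∑ x ∈ a.coeff.support.erase g, a.coeff x * a.coeff x :=
    Finset.sum_nonneg fun _ _ => mul_self_nonneg _
  have h0 : ∑ x ∈ a.coeff.support.erase g, a.coeff x * a.coeff x = 0 := by omega
  rw [Finset.sum_eq_zero_iff_of_nonneg (fun _ _ => mul_self_nonneg _)] at h0
  have hother : ∀ x, x ≠ g → a.coeff x = 0 := by
    intro x hx
    by_contra hx0
    exact hx0 (by simpa using h0 x (by simp [hx, hx0]))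
  have ha : a = single g (a.coeff g) := by
    ext x
    by_cases hx : x = g
    · simp [hx]
    · simp [hother x hx, Ne.symm hx]
  have h2 : a.coeff g * a.coeff g = 1 := by omega
  refine ⟨g, ?_⟩
  rcases mul_self_eq_one_iff.mp h2 with h3 | h3
  · left; rw [ha, h3]; simp [of_apply]
  · right; rw [ha, h3, of_apply]; ext; simp

abbrev Cen (a : MonoidAlgebra ℤ G) : Prop := ∀ b, a * b = b * a

lemma cen_of_coeff (a : MonoidAlgebra ℤ G) (h : ∀ g x, a.coeff (g * x * g⁻¹) = a.coeff x) :
    Cen a := by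
  intro b
  induction b using induction_linear with
  | zero => simp
  | add x y hx hy => simp [mul_add, add_mul, hx, hy]
  | single g r =>
    ext x
    rw [coeff_single_mul_apply, coeff_mul_single_apply, mul_comm r]
    congr 1
    rw [← h g (g⁻¹ * x)]
    congr 1
    group

lemma Cen.coeff {a : MonoidAlgebra ℤ G} (h : Cen a) (g x : G) :
    a.coeff (g * x * g⁻¹) = a.coeff x := by
  have := h (single g 1)
  have := congrArg (fun z => MonoidAlgebra.coeff z (g * x)) this
  simpa [coeff_single_mul_apply, coeff_mul_single_apply] using this

lemma Cen.mul {a b : MonoidAlgebra ℤ G} (ha : Cen a) (hb : Cen b) : Cen (a * b) := by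
  intro c
  rw [mul_assoc, hb c, ← mul_assoc, ha c, mul_assoc]

lemma Cen.st_s3 {a : MonoidAlgebra ℤ G} (ha : Cen a) : Cen (st_s3 a) := by
  apply cen_of_coeff
  intro g x
  rw [st_coeff_s3, st_coeff_s3, ← ha.coeff g x⁻¹]
  congr 1
  group

lemma Cen.inv {a b : MonoidAlgebra ℤ G} (ha : Cen a) (hab : a * b = 1) : Cen b := by
  intro c
  have hba : b * a = 1 := by rw [← ha]; exact hab
  calc b * c = b * c * (a * b) := by rw [hab, mul_one]
    _ = b * (c * a) * b := by noncomm_ring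
    _ = (b * a) * c * b := by rw [← ha c]; noncomm_ring
    _ = c * b := by rw [hba, one_mul]

lemma Cen.eq_zero_of_sq {z : MonoidAlgebra ℤ G} (hz : Cen z) (h : z * z = 0) : z = 0 := by
  apply eq_zero_of_mul_st_s3
  have : z * CutAux.st_s3 z = 0 := by
    apply eq_zero_of_mul_st_s3
    rw [st_mul_s3, st_st_s3]
    have : z * CutAux.st_s3 z * (z * CutAux.st_s3 z) = (z * z) * (CutAux.st_s3 z * CutAux.st_s3 z) := by
      rw [mul_assoc, ← mul_assoc (CutAux.st_s3 z), ← hz (CutAux.st_s3 z)]; noncomm_ring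
    rw [this, h]; simp
  rw [this]; simp

lemma Cen.eq_zero_of_pow {z : MonoidAlgebra ℤ G} (hz : Cen z) (k : ℕ) (h : z ^ k = 0) : z = 0 := by
  have hp : ∀ n, Cen (z ^ n) := by
    intro n
    induction n with
    | zero => intro b; simp
    | succ n ih => rw [pow_succ]; exact ih.mul hz
  have key : ∀ n, z ^ (2 ^ n) = 0 → z = 0 := by
    intro n
    induction n with
    | zero => intro h; simpa using h
    | succ n ih =>
      intro h
      apply ih
      apply (hp _).eq_zero_of_sq
      rw [← pow_add, ← h]; congr 1; ring
  apply key k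
  exact pow_eq_zero_of_le (Nat.lt_two_pow_self).le h

section grading
variable (φ : G →* Multiplicative ℤ)

/-- Degree. -/
def dg (g : G) : ℤ := (φ g).toAdd
lemma dg_mul (g h : G) : dg φ (g * h) = dg φ g + dg φ h := by simp [dg]
lemma dg_inv (g : G) : dg φ g⁻¹ = - dg φ g := by simp [dg]
lemma dg_conj (g x : G) : dg φ (g * x * g⁻¹) = dg φ x := by simp [dg_mul, dg_inv]

open Classical in
/-- Filtered part. -/
noncomputable def flt (P : ℤ → Prop) (a : MonoidAlgebra ℤ G) : MonoidAlgebra ℤ G :=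
  .ofCoeff (a.coeff.filter fun g => P (dg φ g))

open Classical in
lemma flt_coeff (P : ℤ → Prop) (a : MonoidAlgebra ℤ G) (g : G) :
    (flt φ P a).coeff g = if P (dg φ g) then a.coeff g else 0 := by
  simp [flt, Finsupp.filter_apply]

lemma flt_zero (P : ℤ → Prop) : flt φ P (0 : MonoidAlgebra ℤ G) = 0 := by
  ext; simp [flt_coeff]
lemma flt_add (P : ℤ → Prop) (a b : MonoidAlgebra ℤ G) :
    flt φ P (a + b) = flt φ P a + flt φ P b := by
  ext g; by_cases h : P (dg φ g) <;> simp [flt_coeff, h]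
open Classical in
lemma flt_single (P : ℤ → Prop) (g : G) (r : ℤ) :
    flt φ P (single g r) = if P (dg φ g) then single g r else 0 := by
  ext x
  by_cases hx : g = x
  · subst hx; by_cases h : P (dg φ g) <;> simp [flt_coeff, h]
  · by_cases h : P (dg φ g) <;> simp [flt_coeff, h, hx]

lemma flt_cen (P : ℤ → Prop) {a : MonoidAlgebra ℤ G} (ha : Cen a) : Cen (flt φ P a) := by
  classical
  apply cen_of_coeff
  intro g x
  rw [flt_coeff, flt_coeff, dg_conj, ha.coeff]

lemma flt_homog_mul (α γ : ℤ) (a b : MonoidAlgebra ℤ G) :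
    flt φ (· = α + γ) (flt φ (· = α) a * b) = flt φ (· = α) a * flt φ (· = γ) b := by
  classical
  induction a using induction_linear with
  | zero => simp [flt_zero]
  | add x y hx hy => simp [add_mul, flt_add, hx, hy]
  | single g r =>
    induction b using induction_linear with
    | zero => simp [flt_zero]
    | add x y hx hy => simp only [flt_add, mul_add, hx, hy]
    | single h s =>
      by_cases h1 : dg φ g = α
      · by_cases h2 : dg φ h = γ <;>
          simp [flt_single, single_mul_single, dg_mul, h1, h2]
      · simp [flt_single, h1, flt_zero]

lemma flt_top_mul (α γ : ℤ) (a b : MonoidAlgebra ℤ G) :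
    flt φ (· = α + γ) (flt φ (· ≤ α) a * flt φ (· ≤ γ) b) =
      flt φ (· = α) a * flt φ (· = γ) b := by
  classical
  induction a using induction_linear with
  | zero => simp [flt_zero]
  | add x y hx hy => simp only [add_mul, flt_add, hx, hy]
  | single g r =>
    induction b using induction_linear with
    | zero => simp [flt_zero]
    | add x y hx hy => simp only [flt_add, mul_add, hx, hy]
    | single h s =>
      simp only [flt_single]
      split_ifs <;> simp only [flt_single, single_mul_single, dg_mul, mul_zero, zero_mul, flt_zero]
      all_goals first | rw [if_pos (by omega)] | rw [if_neg (by omega)] | omega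

lemma flt_gt_split (γ : ℤ) (a : MonoidAlgebra ℤ G) :
    flt φ (γ - 1 < ·) a = flt φ (γ < ·) a + flt φ (· = γ) a := by
  classical
  ext g
  rw [coeff_add, Finsupp.add_apply, flt_coeff, flt_coeff, flt_coeff]
  split_ifs <;> first | omega | simp

lemma flt_le_split (γ : ℤ) (a : MonoidAlgebra ℤ G) :
    a = flt φ (γ < ·) a + flt φ (· ≤ γ) a := by
  classical
  ext g
  rw [coeff_add, Finsupp.add_apply, flt_coeff, flt_coeff]
  split_ifs <;> first | omega | simp

lemma st_flt (γ : ℤ) (a : MonoidAlgebra ℤ G) :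
    st_s3 (flt φ (· = γ) a) = flt φ (· = -γ) (st_s3 a) := by
  classical
  ext g
  rw [st_coeff_s3, flt_coeff, flt_coeff, st_coeff_s3, dg_inv]
  congr 1
  exact propext (by omega)

lemma flt_eq_gt {β γ : ℤ} (h : γ < β) (a : MonoidAlgebra ℤ G) :
    flt φ (· = β) (flt φ (γ < ·) a) = flt φ (· = β) a := by
  classical
  ext g
  rw [flt_coeff, flt_coeff, flt_coeff]
  split_ifs <;> first | omega | simp

lemma flt_eq_eq {β γ : ℤ} (h : γ ≠ β) (a : MonoidAlgebra ℤ G) :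
    flt φ (· = β) (flt φ (· = γ) a) = 0 := by
  classical
  ext g
  rw [flt_coeff, flt_coeff]
  split_ifs <;> first | omega | simp

lemma flt_self (γ : ℤ) (a : MonoidAlgebra ℤ G) :
    flt φ (· = γ) (flt φ (· = γ) a) = flt φ (· = γ) a := by
  classical
  ext g
  rw [flt_coeff, flt_coeff]
  split_ifs <;> simp

lemma top_comp_zero {w v : MonoidAlgebra ℤ G} (hw : Cen w) (hwv : w * v = 1) (hs : st_s3 w = w)
    (α : ℤ) (hα : 0 < α) (hle : flt φ (· ≤ α) w = w) : flt φ (· = α) w = 0 := by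
  classical
  have hv : Cen v := hw.inv hwv
  have hvs : st_s3 v = v := by
    have h1 : w * st_s3 v = 1 := by
      rw [← hs, ← st_mul_s3, hv w, hwv, st_one]
    calc st_s3 v = v * w * st_s3 v := by rw [hv, hwv, one_mul]
      _ = v := by rw [mul_assoc, h1, mul_one]
  set x := flt φ (· = α) w with hx
  have hxc : Cen x := flt_cen φ _ hw
  -- the key identity
  have key : ∀ γ, x * flt φ (γ < ·) v = 0 →
      flt φ (· = α + (α + γ)) x = x * (x * flt φ (· = γ) v) := by
    intro γ h
    have h1 : x = x * (w * flt φ (· ≤ γ) v) := by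
      have h2 : x * (w * flt φ (γ < ·) v) = 0 := by
        rw [← mul_assoc, hxc w, mul_assoc, h, mul_zero]
      calc x = x * (w * v) := by rw [hwv, mul_one]
        _ = x * (w * flt φ (γ < ·) v) + x * (w * flt φ (· ≤ γ) v) := by
          rw [← mul_add, ← mul_add, ← flt_le_split]
        _ = _ := by rw [h2, zero_add]
    calc flt φ (· = α + (α + γ)) x
        = flt φ (· = α + (α + γ)) (x * (w * flt φ (· ≤ γ) v)) := by rw [← h1]
      _ = x * flt φ (· = α + γ) (w * flt φ (· ≤ γ) v) := flt_homog_mul φ _ _ _ _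
      _ = x * flt φ (· = α + γ) (flt φ (· ≤ α) w * flt φ (· ≤ γ) v) := by rw [hle]
      _ = _ := by rw [flt_top_mul]
  have step : ∀ γ, -α < γ → x * flt φ (γ < ·) v = 0 → x * flt φ (γ - 1 < ·) v = 0 := by
    intro γ hγ h
    have h1 := key γ h
    rw [hx, flt_eq_eq φ (by omega), ← hx] at h1
    have h2 : x * flt φ (· = γ) v = 0 := by
      apply (hxc.mul (flt_cen φ _ hv)).eq_zero_of_sq
      rw [hxc (flt φ (· = γ) v), mul_assoc, ← hxc (flt φ (· = γ) v), ← h1, mul_zero]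
    rw [flt_gt_split, mul_add, h, h2, add_zero]
  obtain ⟨N, hN1, hN⟩ : ∃ N : ℤ, -α ≤ N ∧ flt φ (N < ·) v = 0 := by
    obtain ⟨N, hN⟩ := (v.coeff.support.image (dg φ)).bddAbove
    refine ⟨max N (-α), le_max_right _ _, ?_⟩
    ext g
    rw [flt_coeff]
    split_ifs with h
    · by_contra hg
      have : dg φ g ≤ N := hN (by
        simp only [Finset.coe_image, Set.mem_image, Finset.mem_coe, Finsupp.mem_support_iff]
        exact ⟨g, by simpa using hg, rfl⟩)
      have := le_max_left N (-α)
      omega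
    · rfl
  have all : ∀ n : ℕ, ∀ γ : ℤ, -α ≤ γ → γ = N - n → x * flt φ (γ < ·) v = 0 := by
    intro n
    induction n with
    | zero => intro γ _ h; simp at h; rw [h, hN, mul_zero]
    | succ n ih =>
      intro γ h1 h2
      have := step (γ + 1) (by omega) (ih (γ + 1) (by omega) (by push_cast at h2; omega))
      simpa using this
  have hP : x * flt φ (-α < ·) v = 0 := all (N + α).toNat (-α) le_rfl (by omega)
  have hA : x = x * (x * flt φ (· = -α) v) := by
    rw [← key _ hP]
    rw [show α + (α + -α) = α by ring, hx, flt_self]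
  have hB : x * flt φ (· = α) v = 0 := by
    have := flt_homog_mul φ α α w (flt φ (-α < ·) v)
    rw [← hx, hP, flt_zero, flt_eq_gt φ (by omega)] at this
    exact this.symm
  have hC : st_s3 x * flt φ (· = -α) v = 0 := by
    have := congrArg st_s3 hB
    rw [st_mul_s3, st_zero, st_flt, hvs] at this
    rw [hxc.st_s3]; exact this
  apply eq_zero_of_mul_st_s3
  have : x * st_s3 x = 0 := by
    rw [hxc (st_s3 x)]
    calc st_s3 x * x = st_s3 x * (x * (x * flt φ (· = -α) v)) := by rw [← hA]
      _ = x * (x * (st_s3 x * flt φ (· = -α) v)) := by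
        rw [← mul_assoc (st_s3 x), ← hxc (st_s3 x), mul_assoc x, ← mul_assoc (st_s3 x), ← hxc (st_s3 x), mul_assoc x]
      _ = 0 := by rw [hC]; simp
  rw [this]; simp

lemma dg_eq_zero {w v : MonoidAlgebra ℤ G} (hw : Cen w) (hwv : w * v = 1) (hs : st_s3 w = w)
    (g : G) (hg : w.coeff g ≠ 0) : dg φ g = 0 := by
  classical
  have hne : (w.coeff.support.image (dg φ)).Nonempty :=
    ⟨dg φ g, Finset.mem_image_of_mem _ (by simpa using hg)⟩
  set α := (w.coeff.support.image (dg φ)).max' hne with hα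
  have hmax : ∀ h, w.coeff h ≠ 0 → dg φ h ≤ α := fun h hh =>
    Finset.le_max' _ _ (Finset.mem_image_of_mem _ (by simpa using hh))
  obtain ⟨t, ht, hta⟩ := Finset.mem_image.mp (Finset.max'_mem _ hne)
  have h1 := hmax g hg
  have h2 := hmax g⁻¹ (by rwa [← st_coeff_s3, hs])
  rw [dg_inv] at h2
  by_contra h0
  have hz := top_comp_zero φ hw hwv hs α (by omega) (by
    ext h
    rw [flt_coeff]
    split_ifs with hh
    · rfl
    · by_contra h3; exact hh (hmax h (Ne.symm h3)))
  have := congrArg (fun z => MonoidAlgebra.coeff z t) hz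
  simp only [flt_coeff, hta] at this
  simp at ht
  simp [hα, ht] at this
end grading

section finite
variable {T : Type*} [Group T]

open Classical in
lemma trace_sum_subgroup [Fintype T]
    {E : Type*} [AddCommGroup E] [Module ℂ E] [FiniteDimensional ℂ E]
    (ρ : Representation ℂ T E) (C : Subgroup T) :
    ∃ k : ℤ, ∑ x with x ∈ C, LinearMap.trace ℂ E (ρ x) = k := by
  have hc : (Fintype.card C : ℂ) ≠ 0 := by simp
  let _ : Invertible (Fintype.card C : ℂ) := invertibleOfNonzero hc
  let σ : Representation ℂ C E := ρ.comp C.subtype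
  have h := (Representation.isProj_averageMap σ).trace
  have h2 : σ.averageMap = (Fintype.card C : ℂ)⁻¹ • ∑ x : C, ρ x := by
    simp [Representation.averageMap, GroupAlgebra.average, σ, map_sum]
  rw [h2, map_smul, map_sum, smul_eq_mul, inv_mul_eq_iff_eq_mul₀ hc] at h
  refine ⟨Fintype.card C * Module.finrank ℂ σ.invariants, ?_⟩
  rw [Finset.sum_subtype (p := fun x => x ∈ C) _ (by simp), h]
  push_cast; rfl

open Classical in
lemma sum_zpowers_int [Fintype T] (f : T → ℂ)
    (hf : ∀ (C : Subgroup T), ∃ k : ℤ, ∑ x with x ∈ C, f x = k) (D : Subgroup T) :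
    ∃ k : ℤ, (∑ x with Subgroup.zpowers x = D, f x) = k := by
  induction D using WellFoundedLT.induction with
  | ind D ih =>
    obtain ⟨k, hk⟩ := hf D
    have h1 : ∑ x with x ∈ D, f x
        = ∑ C with C ≤ D, ∑ x with Subgroup.zpowers x = C, f x := by
      rw [← Finset.sum_fiberwise_of_maps_to (s := Finset.univ.filter (· ∈ D))
        (t := Finset.univ.filter (· ≤ D)) (g := fun x => Subgroup.zpowers x)]
      · refine Finset.sum_congr rfl fun C hC => Finset.sum_congr ?_ fun _ _ => rfl
        ext x
        simp only [Finset.mem_filter, Finset.mem_univ, true_and] at hC ⊢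
        constructor
        · exact fun h => h.2
        · rintro rfl
          exact ⟨hC (Subgroup.mem_zpowers x), rfl⟩
      · intro x hx
        simpa using hx
    rw [← Finset.add_sum_erase _ _ (show D ∈ Finset.univ.filter (· ≤ D) by simp)] at h1
    choose! m hm using ih
    refine ⟨k - ∑ C ∈ (Finset.univ.filter (· ≤ D)).erase D, m C, ?_⟩
    push_cast
    rw [← hk, h1, eq_sub_iff_add_eq]
    congr 1
    refine Finset.sum_congr rfl fun C hC => (hm C ?_).symm
    simp at hC
    exact lt_of_le_of_ne hC.2 hC.1

open Classical in
lemma sum_weighted_int [Fintype T] (f : T → ℂ)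
    (hf : ∀ (C : Subgroup T), ∃ k : ℤ, ∑ x with x ∈ C, f x = k) (a : T → ℤ)
    (ha : ∀ x y, Subgroup.zpowers x = Subgroup.zpowers y → a x = a y) :
    ∃ k : ℤ, ∑ x, (a x : ℂ) * f x = k := by
  choose m hm using sum_zpowers_int f hf
  have : ∀ D : Subgroup T, ∃ k : ℤ, ∑ x with Subgroup.zpowers x = D, (a x : ℂ) * f x = k := by
    intro D
    by_cases hD : ∃ y, Subgroup.zpowers y = D
    · obtain ⟨y, rfl⟩ := hD
      refine ⟨a y * m (Subgroup.zpowers y), ?_⟩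
      push_cast
      rw [← hm, Finset.mul_sum]
      refine Finset.sum_congr rfl fun x hx => ?_
      rw [ha x y (by simpa using hx)]
    · refine ⟨0, ?_⟩
      rw [Finset.sum_eq_zero]; · simp
      intro x hx
      exact absurd ⟨x, by simpa using hx⟩ hD
  choose n hn using this
  refine ⟨∑ D, n D, ?_⟩
  rw [← Finset.sum_fiberwise (g := fun x => Subgroup.zpowers x)]
  push_cast
  exact Finset.sum_congr rfl fun D _ => hn D

/-- The base change. -/
noncomputable abbrev io : MonoidAlgebra ℤ T →+* MonoidAlgebra ℂ T :=
  mapRingHom T (Int.castRingHom ℂ)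

lemma io_inj : Function.Injective (io (T := T)) :=
  map_injective _ Int.cast_injective

/-- Left multiplication. -/
noncomputable def L : MonoidAlgebra ℂ T →ₐ[ℂ] Module.End ℂ (MonoidAlgebra ℂ T) :=
  Algebra.lmul ℂ _

lemma L_apply (a v : MonoidAlgebra ℂ T) : L a v = a * v := rfl

lemma io_cen {a : MonoidAlgebra ℤ T} (ha : Cen a) (b : MonoidAlgebra ℂ T) :
    io a * b = b * io a := by
  induction b using induction_linear with
  | zero => simp
  | add x y hx hy => simp [mul_add, add_mul, hx, hy]
  | single g r =>
    have h1 : (single g r : MonoidAlgebra ℂ T) = r • io (single g 1) := by simp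
    rw [h1, mul_smul_comm, smul_mul_assoc, ← map_mul, ha, map_mul]

lemma io_sum [Fintype T] (a : MonoidAlgebra ℤ T) : io a = ∑ x, (a.coeff x : ℂ) • of ℂ T x := by
  classical
  ext y
  simp [Finsupp.single_apply]

lemma eig_int {a b : MonoidAlgebra ℤ T} [Finite T] (ha : Cen a)
    (hz : ∀ x y, Subgroup.zpowers x = Subgroup.zpowers y → a.coeff x = a.coeff y)
    (μ : ℂ) (hμ : (L (io a)).HasEigenvalue μ) : ∃ q : ℚ, μ = q := by
  classical
  have _ := Fintype.ofFinite T
  let E := (L (io a)).eigenspace μ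
  have hE : ∀ v : MonoidAlgebra ℂ T, v ∈ E ↔ io a * v = μ • v := fun v => by
    rw [Module.End.mem_eigenspace_iff, L_apply]
  have hres : ∀ x : T, ∀ v ∈ E, L (of ℂ T x) v ∈ E := by
    intro x v hv
    rw [hE] at hv ⊢
    rw [L_apply, ← mul_assoc, io_cen ha, mul_assoc, hv, mul_smul_comm]
  let ρ : Representation ℂ T E :=
    { toFun := fun x => (L (of ℂ T x)).restrict (hres x)
      map_one' := by
        ext1 v; apply Subtype.ext; simp only [map_one]; rfl
      map_mul' := by
        intro x y
        ext1 v; apply Subtype.ext; simp only [map_mul]; rfl }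
  have hFD : FiniteDimensional ℂ (MonoidAlgebra ℂ T) := inferInstance
  obtain ⟨k, hk⟩ := sum_weighted_int (fun x => LinearMap.trace ℂ E (ρ x))
    (trace_sum_subgroup ρ) _ hz
  have h1 : ∑ x, (a.coeff x : ℂ) • ρ x = μ • (1 : Module.End ℂ E) := by
    ext1 v
    apply Subtype.ext
    have := (hE v).1 v.2
    rw [io_sum, Finset.sum_mul] at this
    simp only [LinearMap.sum_apply, Submodule.coe_sum]
    simp only [smul_mul_assoc] at this
    exact this
  have h2 := congrArg (LinearMap.trace ℂ E) h1
  rw [map_sum] at h2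
  simp only [map_smul, smul_eq_mul, LinearMap.trace_one] at h2
  rw [hk] at h2
  have hpos : Module.finrank ℂ E ≠ 0 := by
    have : Nontrivial E := by
      rw [Submodule.nontrivial_iff_ne_bot]
      exact hμ
    exact Module.finrank_pos.ne'
  refine ⟨k / Module.finrank ℂ E, ?_⟩
  push_cast
  rw [h2]
  field_simp

lemma eig_integral [Finite T] (a : MonoidAlgebra ℤ T) (μ : ℂ) (v : MonoidAlgebra ℂ T)
    (hv : v ≠ 0) (h : io a * v = μ • v) : IsIntegral ℤ μ := by
  obtain ⟨p, hp, hpa⟩ := Algebra.IsIntegral.isIntegral (R := ℤ) a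
  refine ⟨p, hp, ?_⟩
  have key : ∀ q : Polynomial ℤ, io (Polynomial.eval₂ (algebraMap ℤ _) a q) * v
      = (Polynomial.eval₂ (algebraMap ℤ ℂ) μ q) • v := by
    intro q
    induction q using Polynomial.induction_on' with
    | add p q hp hq => simp [Polynomial.eval₂_add, add_mul, add_smul, hp, hq]
    | monomial n r =>
      have hpow : ∀ n : ℕ, io a ^ n * v = μ ^ n • v := by
        intro n
        induction n with
        | zero => simp
        | succ n ih => rw [pow_succ, mul_assoc, h, mul_smul_comm, ih, smul_smul, pow_succ, mul_comm]
      rw [Polynomial.eval₂_monomial, Polynomial.eval₂_monomial, map_mul, map_pow, mul_assoc, hpow,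
        eq_intCast, eq_intCast, map_intCast, mul_smul_comm, mul_smul, smul_comm]
      congr 1
      rw [← Int.smul_one_eq_cast, smul_mul_assoc, one_mul, Int.cast_smul_eq_zsmul]
  have := key p
  rw [hpa, map_zero, zero_mul] at this
  exact (smul_eq_zero.mp this.symm).resolve_right hv

lemma rat_integral {μ : ℂ} {q : ℚ} (h : μ = q) (hi : IsIntegral ℤ μ) : ∃ n : ℤ, μ = n := by
  subst h
  have : IsIntegral ℤ q := by
    have := (isIntegral_algHom_iff (R := ℤ) (algebraMap ℚ ℂ).toIntAlgHom
      (algebraMap ℚ ℂ).injective (x := q)).1 (by simpa using hi)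
    exact this
  obtain ⟨n, hn⟩ := IsIntegrallyClosed.isIntegral_iff.1 this
  exact ⟨n, by rw [← hn]; simp⟩

lemma fin_case [Finite T] {a b : MonoidAlgebra ℤ T} (ha : Cen a) (hab : a * b = 1)
    (hz : ∀ x y, Subgroup.zpowers x = Subgroup.zpowers y → a.coeff x = a.coeff y) :
    a * a = 1 := by
  classical
  have hFD : FiniteDimensional ℂ (MonoidAlgebra ℂ T) := inferInstance
  have heig : ∀ μ, (L (io a)).HasEigenvalue μ → μ * μ = 1 := by
    intro μ hμ
    obtain ⟨q, hq⟩ := eig_int (b := b) ha hz μ hμ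
    obtain ⟨v, hv⟩ := hμ.exists_hasEigenvector
    have hv1 : io a * v = μ • v := hv.apply_eq_smul
    have hba : b * a = 1 := by rw [← ha, hab]
    have h3 : v = μ • (io b * v) := by
      rw [← mul_smul_comm, ← hv1, ← mul_assoc, ← map_mul, hba, map_one, one_mul]
    have hμ0 : μ ≠ 0 := by
      rintro rfl
      exact hv.2 (by rw [h3, zero_smul])
    have h4 : io b * v = μ⁻¹ • v := by
      nth_rewrite 2 [h3]
      rw [smul_smul, inv_mul_cancel₀ hμ0, one_smul]
    obtain ⟨n, hn⟩ := rat_integral hq (eig_integral a μ v hv.2 hv1)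
    obtain ⟨m, hm⟩ := rat_integral (μ := μ⁻¹) (q := q⁻¹) (by rw [hq]; simp)
      (eig_integral b _ v hv.2 h4)
    have h5 : n * m = 1 := by
      have : (n : ℂ) * m = 1 := by rw [← hn, ← hm, mul_inv_cancel₀ hμ0]
      exact_mod_cast this
    rcases Int.eq_one_or_neg_one_of_mul_eq_one h5 with h | h <;> simp [hn, h]
  have hdvd : minpoly ℂ (L (io a)) ∣
      (Polynomial.X * Polynomial.X - 1) ^ (minpoly ℂ (L (io a))).roots.card := by
    have hm : (minpoly ℂ (L (io a))).Monic := minpoly.monic (Algebra.IsIntegral.isIntegral _)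
    conv_lhs => rw [(IsAlgClosed.splits (minpoly ℂ (L (io a)))).eq_prod_roots_of_monic hm]
    rw [← Multiset.prod_replicate, ← Multiset.map_const']
    apply Multiset.prod_dvd_prod_of_dvd
    intro r hr
    rw [Polynomial.dvd_iff_isRoot]
    have : (L (io a)).HasEigenvalue r := by
      apply Module.End.hasEigenvalue_of_isRoot
      exact (Polynomial.mem_roots'.1 hr).2
    simp [heig r this]
  set k := (minpoly ℂ (L (io a))).roots.card
  have h0 : Polynomial.aeval (L (io a)) ((Polynomial.X * Polynomial.X - 1 : Polynomial ℂ) ^ k) = 0 := by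
    obtain ⟨c, hc⟩ := hdvd
    rw [hc, map_mul, minpoly.aeval, zero_mul]
  have h1 : L (io ((a * a - 1) ^ k)) = 0 := by
    rw [← h0]; simp
  have h2 : (a * a - 1) ^ k = 0 := by
    apply io_inj
    have := congrArg (fun f => f 1) h1
    simp only [L_apply, mul_one] at this
    rw [this, map_zero, LinearMap.zero_apply]
  have hc : Cen (a * a - 1) := by
    intro c
    rw [sub_mul, mul_sub, ha.mul ha c, one_mul, mul_one]
  exact sub_eq_zero.mp (hc.eq_zero_of_pow k h2)
end finite

section groups
open scoped IsMulCommutative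
variable (S : Set G)

lemma closure_finiteIndex_center (hS : S.Finite) (hc : ∀ g, ∀ s ∈ S, g * s * g⁻¹ ∈ S) :
    (Subgroup.center (Subgroup.closure S)).FiniteIndex := by
  have _ : Finite S := hS
  let act : MulAction G S :=
    { smul := fun g s => ⟨g * s * g⁻¹, hc g s s.2⟩
      one_smul := fun s => Subtype.ext (by change 1 * (s : G) * 1⁻¹ = s; simp)
      mul_smul := fun g h s => Subtype.ext (by
        change (g * h) * (s : G) * (g * h)⁻¹ = g * (h * s * h⁻¹) * g⁻¹; group) }
  let f : Subgroup.closure S →* Equiv.Perm S :=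
    (MulAction.toPermHom G S).comp (Subgroup.closure S).subtype
  have hle : f.ker ≤ Subgroup.center (Subgroup.closure S) := by
    intro h hh
    have h1 : ∀ s ∈ S, (h : G) * s = s * h := by
      intro s hs
      have : f h ⟨s, hs⟩ = ⟨s, hs⟩ := by rw [MonoidHom.mem_ker.1 hh]; rfl
      have h2 : (h : G) * s * (h : G)⁻¹ = s := congrArg Subtype.val this
      rwa [mul_inv_eq_iff_eq_mul] at h2
    rw [Subgroup.mem_center_iff]
    intro k
    apply Subtype.ext
    have h3 : Subgroup.closure S ≤ Subgroup.centralizer {(h : G)} := by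
      rw [Subgroup.closure_le]
      intro s hs
      simp only [SetLike.mem_coe, Subgroup.mem_centralizer_singleton_iff]
      exact (h1 s hs).symm
    have := Subgroup.mem_centralizer_singleton_iff.1 (h3 k.2)
    exact this
  exact Subgroup.finiteIndex_of_le hle

lemma closure_fg (hS : S.Finite) : Group.FG (Subgroup.closure S) := by
  rw [Group.fg_iff_subgroup_fg]
  exact ⟨hS.toFinset, by simp⟩

lemma exists_hom_int {A : Type*} [CommGroup A] [Group.FG A] (x : A) (hx : ¬ IsOfFinOrder x) :
    ∃ φ : A →* Multiplicative ℤ, φ x ≠ 1 := by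
  let M := Additive A
  let N := M ⧸ Submodule.torsion ℤ M
  have hfin : Module.Finite ℤ M := Module.Finite.iff_addGroup_fg.mpr inferInstance
  have hfree : Module.Free ℤ N := inferInstance
  let y : N := Submodule.Quotient.mk (Additive.ofMul x)
  have hy : y ≠ 0 := by
    intro h
    rw [Submodule.Quotient.mk_eq_zero, Submodule.mem_torsion_iff] at h
    obtain ⟨⟨n, hn⟩, h⟩ := h
    apply hx
    rw [isOfFinOrder_iff_zpow_eq_one]
    exact ⟨n, nonZeroDivisors.ne_zero hn, h⟩
  obtain ⟨f, hf⟩ : ∃ f : N →ₗ[ℤ] ℤ, f y ≠ 0 := by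
    by_contra! hcon
    exact hy ((Module.forall_dual_apply_eq_zero_iff ℤ y).1 hcon)
  refine ⟨AddMonoidHom.toMultiplicativeRight
    ((f.comp (Submodule.mkQ _)).toAddMonoidHom : M →+ ℤ), ?_⟩
  exact fun h => hf (congrArg Multiplicative.toAdd h)

lemma closure_exists_hom (hS : S.Finite) (hc : ∀ g, ∀ s ∈ S, g * s * g⁻¹ ∈ S)
    (h : Subgroup.closure S) (hh : ¬ IsOfFinOrder h) :
    ∃ φ : Subgroup.closure S →* Multiplicative ℤ, φ h ≠ 1 := by
  have _ := closure_finiteIndex_center S hS hc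
  have _ := closure_fg S hS
  obtain ⟨φ, hφ⟩ := exists_hom_int (MonoidHom.transferCenterPow (Subgroup.closure S) h) (by
    intro hf
    apply hh
    have h2 := hf
    rw [← Submonoid.isOfFinOrder_coe, MonoidHom.transferCenterPow_apply] at h2
    rw [isOfFinOrder_pow] at h2
    exact h2.resolve_right Subgroup.FiniteIndex.index_ne_zero)
  exact ⟨φ.comp (MonoidHom.transferCenterPow (Subgroup.closure S)), hφ⟩

lemma closure_finite (hS : S.Finite) (hc : ∀ g, ∀ s ∈ S, g * s * g⁻¹ ∈ S)
    (ht : ∀ s ∈ S, IsOfFinOrder s) : Finite (Subgroup.closure S) := by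
  have _ := closure_finiteIndex_center S hS hc
  have _ := closure_fg S hS
  have htor : ∀ h : Subgroup.closure S, IsOfFinOrder h := by
    intro h
    by_contra hh
    obtain ⟨φ, hφ⟩ := closure_exists_hom S hS hc h hh
    apply hφ
    have hle : Subgroup.closure S ≤ φ.ker.map (Subgroup.closure S).subtype := by
      rw [Subgroup.closure_le]
      intro x hx
      refine ⟨⟨x, Subgroup.subset_closure hx⟩, ?_, rfl⟩
      by_contra hne
      have h1 : IsOfFinOrder (⟨x, Subgroup.subset_closure hx⟩ : Subgroup.closure S) :=
        Submonoid.isOfFinOrder_coe.1 (ht x hx)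
      exact not_isOfFinOrder_of_isMulTorsionFree hne (φ.isOfFinOrder h1)
    obtain ⟨k, hk, hkh⟩ := hle h.2
    have : k = h := Subtype.ext hkh
    rw [← this]; exact hk
  have : Finite (Subgroup.center (Subgroup.closure S)) :=
    CommGroup.finite_of_fg_isMulTorsion _ (fun x => Submonoid.isOfFinOrder_coe.1 (htor x))
  exact (Subgroup.finite_iff_finite_and_finiteIndex (H := Subgroup.center (Subgroup.closure S))).2 ⟨this, inferInstance⟩
end groups

section pull
variable (H : Subgroup G)

/-- Restriction of an element of the group ring to a subgroup. -/
noncomputable def res (w : MonoidAlgebra ℤ G) : MonoidAlgebra ℤ H :=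
  comapDomain H.subtype H.subtype_injective w

lemma res_coeff (w : MonoidAlgebra ℤ G) (h : H) : (res H w).coeff h = w.coeff h := by
  simp [res]

lemma map_res {w : MonoidAlgebra ℤ G} (hw : ∀ g, w.coeff g ≠ 0 → g ∈ H) :
    mapDomainRingHom ℤ H.subtype (res H w) = w := by
  apply mapDomain_comapDomain
  intro g hg
  exact ⟨⟨g, hw g (by simpa using hg)⟩, rfl⟩

lemma map_inj : Function.Injective (mapDomainRingHom ℤ H.subtype) :=
  mapDomain_injective H.subtype_injective

lemma res_cen {w : MonoidAlgebra ℤ G} (hw : Cen w) : Cen (res H w) := by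
  apply cen_of_coeff
  intro g x
  rw [res_coeff, res_coeff]
  exact hw.coeff _ _

lemma res_st {w : MonoidAlgebra ℤ G} (hw : st_s3 w = w) : st_s3 (res H w) = res H w := by
  ext x
  rw [st_coeff_s3, res_coeff, res_coeff, Subgroup.coe_inv, ← st_coeff_s3, hw]

lemma res_mul {w v : MonoidAlgebra ℤ G} (hw : ∀ g, w.coeff g ≠ 0 → g ∈ H)
    (hv : ∀ g, v.coeff g ≠ 0 → g ∈ H) (hwv : w * v = 1) : res H w * res H v = 1 := by
  apply map_inj H
  rw [map_mul, map_res H hw, map_res H hv, hwv, map_one]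
end pull

lemma supp_torsion (S : Set G) (hS : S.Finite) (hc : ∀ g, ∀ s ∈ S, g * s * g⁻¹ ∈ S)
    {w v : MonoidAlgebra ℤ G} (hw : Cen w) (hwv : w * v = 1) (hs : st_s3 w = w)
    (hwS : ∀ g, w.coeff g ≠ 0 → g ∈ S) (hvS : ∀ g, v.coeff g ≠ 0 → g ∈ S)
    (g : G) (hg : w.coeff g ≠ 0) : IsOfFinOrder g := by
  by_contra hn
  have hgH : g ∈ Subgroup.closure S := Subgroup.subset_closure (hwS g hg)
  obtain ⟨φ, hφ⟩ := closure_exists_hom S hS hc ⟨g, hgH⟩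
    (fun h => hn (Submonoid.isOfFinOrder_coe.2 h))
  apply hφ
  have := dg_eq_zero φ (res_cen _ hw)
    (res_mul _ (fun g h => Subgroup.subset_closure (hwS g h))
      (fun g h => Subgroup.subset_closure (hvS g h)) hwv) (res_st _ hs) ⟨g, hgH⟩
    (by rw [res_coeff]; exact hg)
  exact Multiplicative.toAdd.injective this

lemma Cen.isConj {w : MonoidAlgebra ℤ G} (hw : Cen w) {x y : G} (h : IsConj x y) :
    w.coeff x = w.coeff y := by
  obtain ⟨c, hc⟩ := isConj_iff.1 h
  rw [← hc, hw.coeff]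

lemma sq_eq_one (hRS : ∀ x : G, {h : G | IsConj x h}.Finite → IsOfFinOrder x → IsRSElement x)
    {w v : MonoidAlgebra ℤ G} (hw : Cen w) (hwv : w * v = 1) (hs : st_s3 w = w) : w * w = 1 := by
  have hv : Cen v := hw.inv hwv
  have hvw : v * w = 1 := by rw [← hw, hwv]
  have hvs : st_s3 v = v := by
    have h1 : w * st_s3 v = 1 := by
      rw [← hs, ← st_mul_s3, hvw, st_one]
    calc st_s3 v = v * w * st_s3 v := by rw [hvw, one_mul]
      _ = v := by rw [mul_assoc, h1, mul_one]
  let S : Set G := {g | w.coeff g ≠ 0} ∪ {g | v.coeff g ≠ 0}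
  have hS : S.Finite := by
    apply Set.Finite.union
    · exact w.coeff.finite_support
    · exact v.coeff.finite_support
  have hc : ∀ g, ∀ s ∈ S, g * s * g⁻¹ ∈ S := by
    intro g s hs
    simp only [S, Set.mem_union, Set.mem_setOf_eq] at hs ⊢
    rwa [hw.coeff, hv.coeff]
  have hwS : ∀ g, w.coeff g ≠ 0 → g ∈ S := fun g h => Or.inl h
  have hvS : ∀ g, v.coeff g ≠ 0 → g ∈ S := fun g h => Or.inr h
  have ht : ∀ s ∈ S, IsOfFinOrder s := by
    rintro s (h | h)
    · exact supp_torsion S hS hc hw hwv hs hwS hvS s h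
    · exact supp_torsion S hS hc hv hvw hvs hvS hwS s h
  have hfin := closure_finite S hS hc ht
  set H := Subgroup.closure S with hH
  have hnorm : H.Normal := by
    constructor
    intro x hx g
    have hle : H ≤ H.comap (MulAut.conj g).toMonoidHom := by
      rw [hH, Subgroup.closure_le]
      intro s hs
      exact Subgroup.subset_closure (hc g s hs)
    exact hle hx
  have hz : ∀ x y : H, Subgroup.zpowers x = Subgroup.zpowers y →
      (res H w).coeff x = (res H w).coeff y := by
    intro x y hxy
    rw [res_coeff, res_coeff]
    have hx : IsOfFinOrder (x : G) := Submonoid.isOfFinOrder_coe.2 (isOfFinOrder_of_finite x)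
    have hfc : {h : G | IsConj (x : G) h}.Finite := by
      apply Set.Finite.subset (s := (H : Set G)) (Set.toFinite _)
      intro h hh
      obtain ⟨c, rfl⟩ := isConj_iff.1 hh
      exact hnorm.conj_mem _ x.2 c
    have hrs := hRS x hfc hx
    have hy : y ∈ Subgroup.zpowers x := by rw [hxy]; exact Subgroup.mem_zpowers y
    obtain ⟨j, hj⟩ := mem_powers_iff_mem_zpowers.2 hy
    have hj : x ^ j = y := hj
    have hord : orderOf x = orderOf y := by
      rw [← Nat.card_zpowers, ← Nat.card_zpowers, hxy]
    have hpos : 0 < orderOf x := orderOf_pos x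
    have hcop : Nat.Coprime (j + orderOf x) (orderOf x) := by
      rw [Nat.coprime_add_self_left]
      rw [← hj, orderOf_pow] at hord
      have h1 : (orderOf x).gcd j ∣ orderOf x := Nat.gcd_dvd_left _ _
      have h2 := Nat.div_mul_cancel h1
      rw [← hord] at h2
      have h3 : (orderOf x).gcd j = 1 := by
        exact Nat.eq_of_mul_eq_mul_left hpos (by rw [h2, mul_one])
      exact Nat.Coprime.symm h3
    have hyx : (x : G) ^ (j + orderOf x) = y := by
      have : x ^ (j + orderOf x) = y := by rw [pow_add, pow_orderOf_eq_one, mul_one, hj]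
      rw [← this]; simp
    have := hrs (j + orderOf x) (by omega) (by rwa [Subgroup.orderOf_coe])
    rw [hyx] at this
    rcases this with h | h
    · exact (hw.isConj h).symm
    · rw [hw.isConj h, ← st_coeff_s3, hs]
  have key := fin_case (res_cen H hw)
    (res_mul H (fun g h => Subgroup.subset_closure (hwS g h))
      (fun g h => Subgroup.subset_closure (hvS g h)) hwv) hz
  have := congrArg (mapDomainRingHom ℤ H.subtype) key
  rwa [map_mul, map_res H (fun g h => Subgroup.subset_closure (hwS g h)), map_one] at this

theorem isCut (hRS : ∀ x : G, {h : G | IsConj x h}.Finite → IsOfFinOrder x → IsRSElement x) :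
    IsCutGroup G := by
  classical
  intro u hu
  have huc : Cen (u : MonoidAlgebra ℤ G) := fun b => (Subring.mem_center_iff.1 hu b).symm
  apply trivial_of_mul_st
  set a : MonoidAlgebra ℤ G := u.val with ha
  set b : MonoidAlgebra ℤ G := (u⁻¹).val with hb
  have hab : a * b = 1 := by simp [ha, hb]
  have hba : b * a = 1 := by simp [ha, hb]
  have hwc : Cen (a * st_s3 a) := huc.mul huc.st_s3
  have hws : st_s3 (a * st_s3 a) = a * st_s3 a := by rw [st_mul_s3, st_st_s3]
  have hwv : (a * st_s3 a) * (st_s3 b * b) = 1 := by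
    have : st_s3 a * st_s3 b = 1 := by rw [← st_mul_s3, hba, st_one]
    calc (a * st_s3 a) * (st_s3 b * b) = a * (st_s3 a * st_s3 b) * b := by noncomm_ring
      _ = 1 := by rw [this, mul_one, hab]
  have hsq := sq_eq_one hRS hwc hwv hws
  have hne : (a * st_s3 a).coeff 1 ≠ 0 := by
    intro h
    have h0 := eq_zero_of_mul_st_s3 a h
    rw [h0, zero_mul] at hab
    exact zero_ne_one hab
  have hnn : 0 ≤ (a * st_s3 a).coeff 1 := by
    rw [coeff_mul_st]
    exact Finset.sum_nonneg fun _ _ => mul_self_nonneg _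
  obtain ⟨g, hg⟩ := trivial_of_mul_st (a * st_s3 a) (by rw [hws, hsq])
  have hg1 : g = 1 := by
    by_contra hg1
    apply hne
    rcases hg with h | h <;> rw [h] <;> simp [hg1]
  subst hg1
  rcases hg with h | h
  · rw [h, map_one]
  · rw [h] at hnn
    simp at hnn
end CutAux

/-- Let `G` be a normal subgroup of `Γ` with `Φ⁺(Γ ⧸ G) = {1}`.  If every torsion element
of `G` having only finitely many conjugates in `G` is an RS-element of `Γ` (i.e. `Φ⁺(G)` is
an RS-subgroup of `Γ`), then `Γ` is a cut-group. -/
theorem isCutGroup_of_fcTorsion_rs {Γ : Type*} [Group Γ] (G : Subgroup Γ) [G.Normal]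
    (hQ : ∀ q : Γ ⧸ G, q ∈ FCTorsion (Γ ⧸ G) → q = 1)
    (hrs : ∀ g : Γ, g ∈ G → {h : Γ | ∃ x ∈ G, x * g * x⁻¹ = h}.Finite → IsOfFinOrder g →
      IsRSElement g) :
    IsCutGroup Γ := by
  apply CutAux.isCut
  intro x hfin htor
  have hxG : x ∈ G := by
    rw [← QuotientGroup.eq_one_iff]
    apply hQ
    refine ⟨?_, (QuotientGroup.mk' G).isOfFinOrder htor⟩
    apply (hfin.image (QuotientGroup.mk' G)).subset
    intro q hq
    obtain ⟨c, rfl⟩ := isConj_iff.1 hq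
    obtain ⟨d, rfl⟩ := QuotientGroup.mk_surjective c
    exact ⟨d * x * d⁻¹, isConj_iff.2 ⟨d, rfl⟩, rfl⟩
  refine hrs x hxG (hfin.subset ?_) htor
  rintro h ⟨c, -, rfl⟩
  exact isConj_iff.2 ⟨c, rfl⟩
end

section
/- The free product G ∗ G' of two nontrivial groups G and G' is a cut-group. -/
namespace CutAux

open Monoid

section words

variable {M : Bool → Type*} [∀ i, Group (M i)]

/-- Product of an arbitrary list of letters. -/
def lprod (l : List (Σ i, M i)) : CoprodI M :=
  List.prod (l.map fun s => CoprodI.of s.2)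

theorem lprod_append (l l' : List (Σ i, M i)) : lprod (l ++ l') = lprod l * lprod l' := by
  simp [lprod]

theorem lprod_cons (s : Σ i, M i) (l : List (Σ i, M i)) :
    lprod (s :: l) = CoprodI.of s.2 * lprod l := by
  simp [lprod]

theorem lprod_nil : lprod ([] : List (Σ i, M i)) = 1 := rfl

/-- A list is reduced. -/
def Red (l : List (Σ i, M i)) : Prop :=
  (∀ s ∈ l, s.2 ≠ 1) ∧ l.IsChain (fun s t => s.1 ≠ t.1)

open Classical in
/-- The reduced list of an element. -/
noncomputable def toL (g : CoprodI M) : List (Σ i, M i) := (CoprodI.Word.equiv g).toList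

theorem lprod_toL (g : CoprodI M) : lprod (toL g) = g := by
  classical
  exact CoprodI.Word.equiv.symm_apply_apply g

theorem red_toL (g : CoprodI M) : Red (toL g) := by
  classical
  exact ⟨fun s hs => (CoprodI.Word.equiv g).ne_one s hs, (CoprodI.Word.equiv g).chain_ne⟩

theorem toL_lprod (l : List (Σ i, M i)) (h : Red l) : toL (lprod l) = l := by
  classical
  have := CoprodI.Word.equiv.apply_symm_apply
    (⟨l, fun s hs => h.1 s hs, h.2⟩ : CoprodI.Word M)
  exact congrArg CoprodI.Word.toList this

theorem toL_inj {g h : CoprodI M} (H : toL g = toL h) : g = h := by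
  rw [← lprod_toL g, H, lprod_toL]

theorem toL_one : toL (1 : CoprodI M) = [] := by
  have := toL_lprod ([] : List (Σ i, M i)) ⟨by simp, List.isChain_nil⟩
  rwa [lprod_nil] at this

theorem length_of_mul {i : Bool} (m : M i) (g : CoprodI M) :
    (toL (CoprodI.of m * g)).length ≤ (toL g).length + 1 := by
  classical
  have e : CoprodI.Word.equiv (CoprodI.of m * g) =
      (CoprodI.of m : CoprodI M) • CoprodI.Word.equiv g := by
    change (CoprodI.of m * g) • (CoprodI.Word.empty : CoprodI.Word M) = _
    rw [mul_smul]; rfl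
  have key : ∀ p : CoprodI.Word.Pair M i,
      p.tail.toList.length ≤ (CoprodI.Word.rcons p).toList.length ∧
      (CoprodI.Word.rcons p).toList.length ≤ p.tail.toList.length + 1 := by
    intro p
    unfold CoprodI.Word.rcons
    split_ifs <;> simp
  have h1 := key (CoprodI.Word.equivPair i (CoprodI.Word.equiv g))
  have h2 := key { CoprodI.Word.equivPair i (CoprodI.Word.equiv g) with
    head := m * (CoprodI.Word.equivPair i (CoprodI.Word.equiv g)).head }
  rw [← CoprodI.Word.equivPair_symm, Equiv.symm_apply_apply] at h1
  rw [← CoprodI.Word.of_smul_def] at h2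
  unfold toL
  rw [e]
  exact h2.2.trans (Nat.succ_le_succ h1.1)

theorem length_lprod (l : List (Σ i, M i)) : (toL (lprod l)).length ≤ l.length := by
  induction l with
  | nil => simp [lprod_nil, toL_one]
  | cons s l ih =>
    rw [lprod_cons]
    have := length_of_mul s.2 (lprod l)
    simp only [List.length_cons]
    omega

/-- Concatenation of the normal forms of `p` and `q` is reduced. -/
def Compat (p q : List (Σ i, M i)) : Prop :=
  ∀ x ∈ p.getLast?, ∀ y ∈ q.head?, x.1 ≠ y.1

theorem red_append {p q : List (Σ i, M i)} (hp : Red p) (hq : Red q) (h : Compat p q) :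
    Red (p ++ q) := by
  refine ⟨fun s hs => ?_, List.isChain_append.2 ⟨hp.2, hq.2, h⟩⟩
  rcases List.mem_append.1 hs with hs | hs
  · exact hp.1 s hs
  · exact hq.1 s hs

theorem red_single {i : Bool} (m : M i) (hm : m ≠ 1) : Red [(⟨i, m⟩ : Σ i, M i)] :=
  ⟨by simpa using hm, by simp⟩

theorem toL_mul (p q : CoprodI M) (h : Compat (toL p) (toL q)) :
    toL (p * q) = toL p ++ toL q := by
  have := toL_lprod _ (red_append (red_toL p) (red_toL q) h)
  rwa [lprod_append, lprod_toL, lprod_toL] at this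

theorem toL_mul_or (p q : CoprodI M) :
    toL (p * q) = toL p ++ toL q ∨ (toL (p * q)).length < (toL p).length + (toL q).length := by
  by_cases h : Compat (toL p) (toL q)
  · exact Or.inl (toL_mul p q h)
  right
  unfold Compat at h
  push Not at h
  obtain ⟨⟨i, x⟩, hx, ⟨j, y⟩, hy, hxy⟩ := h
  dsimp only at hxy
  subst hxy
  obtain ⟨l, hl⟩ := List.getLast?_eq_some_iff.1 hx
  obtain ⟨l', hl'⟩ := List.head?_eq_some_iff.1 hy
  have e : p * q = lprod (l ++ ⟨i, x * y⟩ :: l') := by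
    conv_lhs => rw [← lprod_toL p, ← lprod_toL q, hl, hl']
    simp only [lprod_append, lprod_cons, lprod_nil, map_mul, mul_assoc, mul_one]
  have := length_lprod (l ++ ⟨i, x * y⟩ :: l')
  rw [e, hl, hl']
  simp at this ⊢
  omega

end words

section central

theorem coeff_conj {H : Type*} [Group H] (u : MonoidAlgebra ℤ H)
    (hu : u ∈ Subring.center (MonoidAlgebra ℤ H)) (g h : H) :
    u.coeff (g * h * g⁻¹) = u.coeff h := by
  have := Subring.mem_center_iff.1 hu (MonoidAlgebra.single g 1)
  have := congrArg (fun z => z.coeff (g * h)) this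
  simpa using this.symm

variable {M : Bool → Type*} [∀ i, Group (M i)]

theorem exists_max [∀ i, Nontrivial (M i)] (u : MonoidAlgebra ℤ (CoprodI M)) (h0 : u ≠ 0)
    (hu : u ∈ Subring.center (MonoidAlgebra ℤ (CoprodI M))) :
    ∃ w, u.coeff w ≠ 0 ∧ (∀ z, u.coeff z ≠ 0 → (toL z).length ≤ (toL w).length) ∧
      (∀ x ∈ (toL w).head?, x.1 = true) ∧ (∀ x ∈ (toL w).getLast?, x.1 = false) := by
  have hne : u.coeff.support.Nonempty := by
    rw [Finset.nonempty_iff_ne_empty]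
    intro h
    apply h0
    ext a
    simpa using (Finsupp.support_eq_empty.1 h ▸ rfl : u.coeff a = (0 : CoprodI M →₀ ℤ) a)
  obtain ⟨w, hw, hmax⟩ := Finset.exists_max_image u.coeff.support (fun z => (toL z).length) hne
  simp only [Finsupp.mem_support_iff] at hw hmax
  rcases hL : toL w with _ | ⟨x, l⟩
  · exact ⟨w, hw, hmax, by simp [hL], by simp [hL]⟩
  have hred : Red (x :: l) := hL ▸ red_toL w
  obtain ⟨y, hy⟩ : ∃ y, (x :: l).getLast? = some y :=
    ⟨_, List.getLast?_eq_some_getLast (by simp)⟩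
  have hxy : x.1 ≠ y.1 := by
    intro hxy
    obtain ⟨b, hb⟩ := exists_ne (1 : M (!x.1))
    have r1 : Red ([(⟨_, b⟩ : Σ i, M i)] ++ (x :: l)) :=
      red_append (red_single b hb) hred (by simp [Compat])
    have r2 : Red ([(⟨_, b⟩ : Σ i, M i)] ++ (x :: l) ++ [⟨_, b⁻¹⟩]) := by
      refine red_append r1 (red_single _ (inv_ne_one.2 hb)) ?_
      intro z hz t ht
      rw [List.getLast?_append, hy] at hz
      simp at hz ht
      subst hz ht
      simp [hxy]
    have e : lprod ([(⟨_, b⟩ : Σ i, M i)] ++ (x :: l) ++ [⟨_, b⁻¹⟩]) =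
        CoprodI.of b * w * (CoprodI.of b)⁻¹ := by
      rw [← hL, lprod_append, lprod_append, lprod_toL]
      simp [lprod]
    have h1 := toL_lprod _ r2
    rw [e] at h1
    have h2 := hmax (CoprodI.of b * w * (CoprodI.of b)⁻¹) (by rwa [coeff_conj u hu])
    rw [h1, hL] at h2
    simp at h2
  by_cases hx : x.1 = true
  · refine ⟨w, hw, hmax, ?_, ?_⟩
    · rw [hL]; simpa using hx
    · rw [hL, hy]
      intro z hz
      simp at hz
      subst hz
      rw [hx] at hxy
      simpa using hxy.symm
  have hx' : x.1 = false := by simpa using hx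
  have hy' : y.1 = true := by rw [hx'] at hxy; simpa using hxy.symm
  rcases l with _ | ⟨x2, l⟩
  · simp at hy; subst hy; exact absurd rfl hxy
  have hch := hred.2
  rw [List.isChain_cons_cons] at hch
  have hx2 : x2.1 = true := by have := hch.1; rw [hx'] at this; simpa using this.symm
  have hy2 : (x2 :: l).getLast? = some y := by simpa using hy
  have r : Red ((x2 :: l) ++ [x]) := by
    refine red_append ⟨fun s hs => hred.1 s (List.mem_cons_of_mem _ hs), hch.2⟩
      (red_single x.2 (hred.1 x (by simp))) ?_
    intro z hz t ht
    rw [hy2] at hz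
    simp at hz ht
    subst hz ht
    exact hxy.symm
  have e : lprod ((x2 :: l) ++ [x]) = (CoprodI.of x.2)⁻¹ * w * ((CoprodI.of x.2)⁻¹)⁻¹ := by
    conv_rhs => rw [← lprod_toL w, hL, lprod_cons]
    rw [lprod_append]
    simp [lprod]
  have h1 := toL_lprod _ r
  refine ⟨lprod ((x2 :: l) ++ [x]), ?_, ?_, ?_, ?_⟩
  · rwa [e, coeff_conj u hu]
  · intro z hz
    have := hmax z hz
    rw [h1]
    rw [hL] at this
    simpa using this
  · rw [h1]; simpa using hx2
  · rw [h1, List.getLast?_concat]; simpa using hx'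

theorem supp_one (u : MonoidAlgebra ℤ (CoprodI M))
    (h : ∀ z, u.coeff z ≠ 0 → (toL z).length ≤ 0) :
    u = MonoidAlgebra.single 1 (u.coeff 1) := by
  classical
  ext z
  by_cases hz : z = 1
  · subst hz; simp
  · rw [MonoidAlgebra.coeff_single, Finsupp.single_apply, if_neg (Ne.symm hz)]
    by_contra h0
    have := h z h0
    apply hz
    apply toL_inj
    rw [toL_one]
    exact List.length_eq_zero_iff.1 (by omega)

theorem isCutGroup_coprodI [∀ i, Nontrivial (M i)] : IsCutGroup (CoprodI M) := by
  intro u hu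
  have hv : ((u⁻¹ : (MonoidAlgebra ℤ (CoprodI M))ˣ) : MonoidAlgebra ℤ (CoprodI M)) ∈
      Subring.center (MonoidAlgebra ℤ (CoprodI M)) := by
    rw [Subring.mem_center_iff] at hu ⊢
    intro g
    have h : Commute g (u : MonoidAlgebra ℤ (CoprodI M)) := hu g
    exact h.units_inv_right
  have huv := u.mul_inv
  obtain ⟨w, hw, hwm, hws, hwe⟩ := exists_max _ u.ne_zero hu
  obtain ⟨w', hw', hwm', hws', hwe'⟩ := exists_max _ (u⁻¹).ne_zero hv
  have hc : toL (w * w') = toL w ++ toL w' := toL_mul _ _ (by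
    intro x hx y hy
    rw [hwe x hx, hws' y hy]
    simp)
  have hun : UniqueMul (u : MonoidAlgebra ℤ (CoprodI M)).coeff.support
      ((u⁻¹ : (MonoidAlgebra ℤ (CoprodI M))ˣ) : MonoidAlgebra ℤ (CoprodI M)).coeff.support
      w w' := by
    intro p q hp hq hpq
    rw [Finsupp.mem_support_iff] at hp hq
    have h1 := hwm p hp
    have h2 := hwm' q hq
    have h3 := toL_mul_or p q
    rw [hpq, hc, List.length_append] at h3
    rcases h3 with h3 | h3
    · have hl := congrArg List.length h3
      simp only [List.length_append] at hl
      have := List.append_inj h3 (by omega)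
      exact ⟨toL_inj this.1.symm, toL_inj this.2.symm⟩
    · omega
  have hcoef := MonoidAlgebra.coeff_mul_mul_of_uniqueMul hun
  rw [huv] at hcoef
  have hone : w * w' = 1 := by
    classical
    by_contra hne
    rw [MonoidAlgebra.one_def, MonoidAlgebra.coeff_single, Finsupp.single_apply,
      if_neg (Ne.symm hne)] at hcoef
    exact mul_ne_zero hw hw' hcoef.symm
  rw [hone, toL_one] at hc
  have hc' := List.append_eq_nil_iff.1 hc.symm
  rw [hc'.1] at hwm
  have hw1 : w = 1 := toL_inj (by rw [hc'.1, toL_one])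
  have hw1' : w' = 1 := toL_inj (by rw [hc'.2, toL_one])
  have hus := supp_one _ hwm
  rw [hone, hw1, hw1'] at hcoef
  have hcd : (u : MonoidAlgebra ℤ (CoprodI M)).coeff 1 *
      ((u⁻¹ : (MonoidAlgebra ℤ (CoprodI M))ˣ) : MonoidAlgebra ℤ (CoprodI M)).coeff 1 = 1 := by
    rw [← hcoef, MonoidAlgebra.one_def]
    simp
  refine ⟨1, ?_⟩
  rcases Int.eq_one_or_neg_one_of_mul_eq_one hcd with h | h
  · left; rw [hus, h]; simp
  · right; rw [hus, h]; simp

end central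

section transfer

theorem isCutGroup_of_equiv {H K : Type*} [Group H] [Group K] (e : H ≃* K)
    (h : IsCutGroup K) : IsCutGroup H := by
  intro u hu
  let E := MonoidAlgebra.domCongr ℤ ℤ e
  obtain ⟨k, hk⟩ := h (Units.map (E : MonoidAlgebra ℤ H →* MonoidAlgebra ℤ K) u) (by
    rw [Subring.mem_center_iff] at hu ⊢
    intro z
    obtain ⟨z, rfl⟩ := E.surjective z
    change E z * E u = E u * E z
    rw [← map_mul, ← map_mul, hu])
  refine ⟨e.symm k, hk.imp (fun hk => ?_) fun hk => ?_⟩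
  · apply E.injective
    refine Eq.trans hk ?_
    simp [E]
  · apply E.injective
    refine Eq.trans hk ?_
    simp [E]

universe u v

/-- The two factors as a family. -/
def Fam (G : Type u) (K : Type v) : Bool → Type (max u v)
  | true => ULift.{v} G
  | false => ULift.{u} K

variable (G : Type u) (K : Type v) [Group G] [Group K]

instance famGroup : ∀ i, Group (Fam G K i)
  | true => inferInstanceAs (Group (ULift.{v} G))
  | false => inferInstanceAs (Group (ULift.{u} K))

instance famNontrivial [Nontrivial G] [Nontrivial K] : ∀ i, Nontrivial (Fam G K i)
  | true => inferInstanceAs (Nontrivial (ULift.{v} G))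
  | false => inferInstanceAs (Nontrivial (ULift.{u} K))

/-- The first factor. -/
def eT : G ≃* Fam G K true := (MulEquiv.ulift (α := G)).symm

/-- The second factor. -/
def eF : K ≃* Fam G K false := MulEquiv.ulift.symm

/-- The family of maps into the binary coproduct. -/
def famHom : ∀ i, Fam G K i →* Monoid.Coprod G K
  | true => Monoid.Coprod.inl.comp (eT G K).symm.toMonoidHom
  | false => Monoid.Coprod.inr.comp (eF G K).symm.toMonoidHom

/-- Binary and indexed coproducts agree. -/
def coprodEquiv : Monoid.Coprod G K ≃* CoprodI (Fam G K) :=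
  MonoidHom.toMulEquiv
    (Monoid.Coprod.lift ((CoprodI.of (M := Fam G K) (i := true)).comp (eT G K).toMonoidHom)
      ((CoprodI.of (M := Fam G K) (i := false)).comp (eF G K).toMonoidHom))
    (CoprodI.lift (famHom G K))
    (by
      ext x
      · simp [famHom]
      · simp [famHom])
    (by
      apply CoprodI.ext_hom
      intro i
      ext x
      cases i <;> simp [famHom])

end transfer

end CutAux

/-- The free product `G ∗ G'` of two nontrivial groups is a cut-group. -/
theorem isCutGroup_coprod (G G' : Type*) [Group G] [Group G'] [Nontrivial G] [Nontrivial G'] :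
    IsCutGroup (Monoid.Coprod G G') := by
  exact CutAux.isCutGroup_of_equiv (CutAux.coprodEquiv G G') CutAux.isCutGroup_coprodI
end
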